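/- arXiv:2203.10915 — 3 statements merged into one kernel-verified Lean document; each statement's English description precedes it below -/
import Mathlib

section
/- For any ν ∈ ℂ, lim_{x → +∞} K_ν(x) / ((π/(2x))^{1/2} e^{−x}) = 1, where x ranges over positive reals. -/
/-!
The proof rests on the integral representation `K_ν(x) = (1/2) ∫_ℝ exp(-x cosh u + ν u) du`,
from which the asymptotics follow by the Laplace method: after `u = v/√x` the integrand, multiplied
by `e^x`, is dominated by `exp(-v²/2 + ‖ν‖ |v|)` and tends to `exp(-v²/2)`.

To obtain the representation from the power series, write `s = x²/4` and let
`E_ν(s) = Σ sⁿ / (n! Γ(n+ν+1))` and `J_ν(s) = ∫_ℝ exp(-e^u - s e^{-u} + ν u) du`, so that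
`I_ν(x) = (x/2)^ν E_ν(s)` and the integral above is `(x/2)^{-ν} J_ν(s)`. They satisfy
* `E_ν' = E_{ν+1}` and `E_ν = (ν+1) E_{ν+1} + s E_{ν+2}`;
* `J_ν' = -J_{ν-1}`, `J_{ν+1} = ν J_ν + s J_{ν-1}` and `J_ν = s^ν J_{-ν}`.

Hence `E_ν J_{ν+1} + s E_{ν+1} J_ν` has zero derivative in `s`; its limit at `s = 0` is `1` when
`Re ν > -1`, and it is invariant under `ν ↦ ν + 1`, so it is `1` for every `ν` (`bessel_cross`).
In the same way `s E_{ν+1} E_{-ν} - E_{-ν-1} E_ν = sin(πν)/π` (`besselE_wronskian`). Eliminating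
`J_{ν+1}` between the relations for `ν` and `-ν` gives
`J_ν sin(πν)/π = E_{-ν} - s^ν E_ν` (`besselJ_mul_sin`), which is the representation when `ν` is
not an integer. The integral is continuous in `ν`, so the representation persists at integers,
where `K_ν` is defined as a limit (`besselK_eq_besselF`).
-/

open Filter Set MeasureTheory
open scoped Real Classical

/-- The modified Bessel function of the first kind
`I_ν(z) = Σ_{n=0}^∞ (z/2)^{ν+2n} / (n! Γ(n+ν+1))`, with the principal branch of powers.
(When `ν` is a negative integer the terms with `n + ν + 1 ≤ 0` vanish, since Mathlib's
`Complex.Gamma` vanishes at nonpositive integers, implementing the convention that the sum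
starts at `n = -ν`.) -/
noncomputable def besselI (ν z : ℂ) : ℂ :=
  ∑' n : ℕ, (z / 2) ^ (ν + 2 * (n : ℂ)) / ((n.factorial : ℂ) * Complex.Gamma ((n : ℂ) + ν + 1))

/-- The modified Bessel function of the second kind:
`K_ν = (π / (2 sin (νπ))) (I_{-ν} - I_ν)` for non-integer `ν`, and for integer `ν` the limit
of this expression as the order tends to `ν`. -/

noncomputable def besselK (ν z : ℂ) : ℂ :=
  if ∃ n : ℤ, ν = (n : ℂ) then
    limUnder (nhdsWithin ν {ν}ᶜ)
      (fun μ => ((Real.pi : ℂ) / (2 * Complex.sin (μ * (Real.pi : ℂ)))) *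
        (besselI (-μ) z - besselI μ z))
  else ((Real.pi : ℂ) / (2 * Complex.sin (ν * (Real.pi : ℂ)))) * (besselI (-ν) z - besselI ν z)

/-! ### The entire series -/

/-- The entire function `E_ν(z) = Σ zⁿ / (n! Γ(n+ν+1))`, for which
`I_ν(x) = (x/2)^ν E_ν(x²/4)`. -/
noncomputable def besselE (ν z : ℂ) : ℂ :=
  ∑' n : ℕ, (Complex.Gamma ((n : ℂ) + ν + 1))⁻¹ * (z ^ n / (n.factorial : ℂ))

/-- Once `n ≥ ‖ν‖` the recurrence `1/Γ(w) = w/Γ(w+1)` makes the moduli nonincreasing. -/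
lemma exists_bound_inv_Gamma (ν : ℂ) :
    ∃ C : ℝ, ∀ n : ℕ, ‖(Complex.Gamma ((n : ℂ) + ν + 1))⁻¹‖ ≤ C := by
  obtain ⟨N, hN⟩ := exists_nat_ge ‖ν‖
  have hstep : ∀ n : ℕ, N ≤ n →
      ‖(Complex.Gamma (((n + 1 : ℕ) : ℂ) + ν + 1))⁻¹‖ ≤
        ‖(Complex.Gamma ((n : ℂ) + ν + 1))⁻¹‖ := by
    intro n hn
    rw [Complex.one_div_Gamma_eq_self_mul_one_div_Gamma_add_one ((n : ℂ) + ν + 1), norm_mul]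
    have h1 : (1 : ℝ) ≤ ‖(n : ℂ) + ν + 1‖ := by
      have h2 : ‖((n : ℂ) + 1)‖ ≤ ‖(n : ℂ) + ν + 1‖ + ‖ν‖ := by
        have h := norm_sub_le ((n : ℂ) + ν + 1) ν
        rwa [show (n : ℂ) + ν + 1 - ν = (n : ℂ) + 1 by ring] at h
      have h3 : ‖((n : ℂ) + 1)‖ = n + 1 := by
        have : ((n : ℂ) + 1) = ((n + 1 : ℕ) : ℂ) := by push_cast; rfl
        rw [this, Complex.norm_natCast]; push_cast; rfl
      have h4 : (N : ℝ) ≤ n := by exact_mod_cast hn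
      linarith
    have h5 : ((n + 1 : ℕ) : ℂ) + ν + 1 = (n : ℂ) + ν + 1 + 1 := by push_cast; ring
    rw [h5]
    exact le_mul_of_one_le_left (norm_nonneg _) h1
  obtain ⟨C, hC⟩ : ∃ C : ℝ, ∀ n ∈ Finset.range (N + 1),
      ‖(Complex.Gamma ((n : ℂ) + ν + 1))⁻¹‖ ≤ C :=
    ⟨∑ n ∈ Finset.range (N + 1), ‖(Complex.Gamma ((n : ℂ) + ν + 1))⁻¹‖, fun n hn =>
      Finset.single_le_sum (f := fun n : ℕ => ‖(Complex.Gamma ((n : ℂ) + ν + 1))⁻¹‖)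
        (fun _ _ => norm_nonneg _) hn⟩
  refine ⟨C, fun n => ?_⟩
  rcases le_total n N with h | h
  · exact hC n (Finset.mem_range.2 (by omega))
  · induction n, h using Nat.le_induction with
    | base => exact hC N (Finset.mem_range.2 (by omega))
    | succ n hn ih => exact (hstep n hn).trans ih

lemma summable_bdd_mul_pow_div_factorial {a : ℕ → ℂ} {C : ℝ} (ha : ∀ n, ‖a n‖ ≤ C) (z : ℂ) :
    Summable fun n : ℕ => a n * (z ^ n / (n.factorial : ℂ)) := by
  refine Summable.of_norm_bounded
    ((Real.summable_pow_div_factorial ‖z‖).mul_left C) (fun n => ?_)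
  rw [norm_mul, norm_div, norm_pow, Complex.norm_natCast]
  exact mul_le_mul_of_nonneg_right (ha n) (by positivity)

lemma hasDerivAt_tsum_bdd_mul_pow_div_factorial {a : ℕ → ℂ} {C : ℝ} (ha : ∀ n, ‖a n‖ ≤ C)
    (z : ℂ) :
    HasDerivAt (fun z : ℂ => ∑' n : ℕ, a n * (z ^ n / (n.factorial : ℂ)))
      (∑' n : ℕ, a (n + 1) * (z ^ n / (n.factorial : ℂ))) z := by
  have hsplit : (fun z : ℂ => ∑' n : ℕ, a n * (z ^ n / (n.factorial : ℂ))) =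
      fun z : ℂ => a 0 + ∑' n : ℕ, a (n + 1) * (z ^ (n + 1) / ((n + 1).factorial : ℂ)) := by
    funext z
    rw [(summable_bdd_mul_pow_div_factorial ha z).tsum_eq_zero_add]
    simp
  rw [hsplit]
  refine HasDerivAt.const_add _ ?_
  set R : ℝ := ‖z‖ + 1
  refine hasDerivAt_tsum_of_isPreconnected
    (g := fun n z => a (n + 1) * (z ^ (n + 1) / ((n + 1).factorial : ℂ)))
    (g' := fun n z => a (n + 1) * (z ^ n / (n.factorial : ℂ)))
    (u := fun n => C * (R ^ n / (n.factorial : ℝ))) (t := Metric.ball 0 R) (y₀ := 0)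
    ((Real.summable_pow_div_factorial R).mul_left C) Metric.isOpen_ball
    (convex_ball _ _).isPreconnected ?_ ?_ (Metric.mem_ball_self (by positivity)) ?_ ?_
  · intro n y _
    have h := ((hasDerivAt_pow (n + 1) y).div_const ((n + 1).factorial : ℂ)).const_mul (a (n + 1))
    refine h.congr_deriv ?_
    rw [Nat.factorial_succ]
    have h1 : ((n : ℂ) + 1) ≠ 0 := by exact_mod_cast Nat.succ_ne_zero n
    have h2 : (n.factorial : ℂ) ≠ 0 := by exact_mod_cast Nat.factorial_ne_zero n
    push_cast
    field_simp
  · intro n y hy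
    rw [mem_ball_zero_iff] at hy
    rw [norm_mul, norm_div, norm_pow, Complex.norm_natCast]
    have hC : 0 ≤ C := (norm_nonneg _).trans (ha 0)
    gcongr
    exact ha _
  · simp
  · rw [mem_ball_zero_iff]
    exact lt_add_one _

lemma hasDerivAt_besselE (ν z : ℂ) : HasDerivAt (besselE ν) (besselE (ν + 1) z) z := by
  obtain ⟨C, hC⟩ := exists_bound_inv_Gamma ν
  have h := hasDerivAt_tsum_bdd_mul_pow_div_factorial hC z
  refine HasDerivAt.congr_deriv (f := besselE ν) h ?_
  unfold besselE
  refine tsum_congr fun n => ?_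
  congr 3
  push_cast
  ring

lemma besselE_zero (ν : ℂ) : besselE ν 0 = (Complex.Gamma (ν + 1))⁻¹ := by
  unfold besselE
  rw [tsum_eq_single 0]
  · simp
  · intro n hn
    simp [hn]

lemma besselE_recurrence (ν z : ℂ) :
    besselE ν z = (ν + 1) * besselE (ν + 1) z + z * besselE (ν + 2) z := by
  obtain ⟨C, hC⟩ := exists_bound_inv_Gamma ν
  obtain ⟨C₁, hC₁⟩ := exists_bound_inv_Gamma (ν + 1)
  obtain ⟨C₂, hC₂⟩ := exists_bound_inv_Gamma (ν + 2)
  have s0 := summable_bdd_mul_pow_div_factorial hC z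
  have s1 := summable_bdd_mul_pow_div_factorial hC₁ z
  have s2 := summable_bdd_mul_pow_div_factorial hC₂ z
  unfold besselE
  rw [s0.tsum_eq_zero_add, s1.tsum_eq_zero_add, mul_add, ← tsum_mul_left, ← tsum_mul_left,
    add_assoc ((ν + 1) * _), ← Summable.tsum_add]
  · congr 1
    · simp only [Nat.cast_zero, zero_add, pow_zero, Nat.factorial_zero, Nat.cast_one, div_one,
        mul_one]
      exact Complex.one_div_Gamma_eq_self_mul_one_div_Gamma_add_one (ν + 1)
    · refine tsum_congr fun n => ?_
      rw [Complex.one_div_Gamma_eq_self_mul_one_div_Gamma_add_one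
        (((n + 1 : ℕ) : ℂ) + ν + 1), Nat.factorial_succ]
      have e1 : ((n + 1 : ℕ) : ℂ) + (ν + 1) + 1 = ((n + 1 : ℕ) : ℂ) + ν + 1 + 1 := by ring
      have e2 : (n : ℂ) + (ν + 2) + 1 = ((n + 1 : ℕ) : ℂ) + ν + 1 + 1 := by push_cast; ring
      rw [e1, e2]
      have h1 : ((n : ℂ) + 1) ≠ 0 := by exact_mod_cast Nat.succ_ne_zero n
      have h2 : (n.factorial : ℂ) ≠ 0 := by exact_mod_cast Nat.factorial_ne_zero n
      push_cast
      field_simp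
      ring
  · exact ((summable_nat_add_iff 1).2 s1).mul_left _
  · exact s2.mul_left _

lemma besselI_eq_besselE (ν : ℂ) {x : ℝ} (hx : 0 < x) :
    besselI ν x = ((x : ℂ) / 2) ^ ν * besselE ν (((x : ℂ) / 2) ^ 2) := by
  have h0 : (x : ℂ) / 2 ≠ 0 := by
    simp [hx.ne']
  unfold besselI besselE
  rw [← tsum_mul_left]
  refine tsum_congr fun n => ?_
  rw [Complex.cpow_add _ _ h0, ← pow_mul]
  have : ((x : ℂ) / 2) ^ (2 * (n : ℂ)) = ((x : ℂ) / 2) ^ (2 * n) := by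
    rw [← Complex.cpow_natCast]; push_cast; rfl
  rw [this, div_eq_mul_inv, mul_inv]
  ring

/-- The Wronskian of `I_ν` and `I_{-ν}`, written for `E`: the left side has zero derivative,
and its value at `z = 0` is given by the reflection formula for `Γ`. -/
lemma besselE_wronskian (ν z : ℂ) :
    z * (besselE (ν + 1) z * besselE (-ν) z) - besselE (-ν - 1) z * besselE ν z =
      Complex.sin (π * ν) / π := by
  set D : ℂ → ℂ := fun z =>
    z * (besselE (ν + 1) z * besselE (-ν) z) - besselE (-ν - 1) z * besselE ν z with hD
  have hd : ∀ w, HasDerivAt D 0 w := by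
    intro w
    have h := ((hasDerivAt_id w).mul
      ((hasDerivAt_besselE (ν + 1) w).mul (hasDerivAt_besselE (-ν) w))).sub
      ((hasDerivAt_besselE (-ν - 1) w).mul (hasDerivAt_besselE ν w))
    refine HasDerivAt.congr_deriv h ?_
    have r1 := besselE_recurrence ν w
    have r2 := besselE_recurrence (-ν - 1) w
    have e1 : -ν - 1 + 1 = -ν := by ring
    have e2 : -ν - 1 + 2 = -ν + 1 := by ring
    have e3 : ν + 1 + 1 = ν + 2 := by ring
    rw [e1, e2] at r2
    rw [e1, e3]
    simp only [id, Pi.mul_apply]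
    rw [r2, r1]
    ring
  have hc : D z = D 0 := is_const_of_deriv_eq_zero (fun w => (hd w).differentiableAt)
    (fun w => (hd w).deriv) z 0
  change D z = _
  rw [hc, hD]
  simp only [zero_mul, zero_sub, besselE_zero]
  have hg := Complex.Gamma_mul_Gamma_one_sub (-ν)
  have e1 : -ν - 1 + 1 = -ν := by ring
  have e2 : 1 - -ν = ν + 1 := by ring
  rw [e2] at hg
  rw [e1, ← mul_inv, hg, mul_neg, Complex.sin_neg, inv_div]
  ring

/-! ### The integral -/

/-- The integrand `exp(-e^u - s e^{-u} + ν u)` of `besselJ`. -/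
noncomputable def besselKer (ν : ℂ) (s u : ℝ) : ℂ :=
  Complex.exp (((-Real.exp u - s * Real.exp (-u) : ℝ) : ℂ) + ν * u)

/-- `J_ν(s) = ∫_ℝ exp(-e^u - s e^{-u} + ν u) du`, which is `Γ(ν)` at `s = 0` when `Re ν > 0`, and equals
`2 (x/2)^ν K_ν(x)` at `s = x²/4` for `x > 0`. -/
noncomputable def besselJ (ν : ℂ) (s : ℝ) : ℂ := ∫ u : ℝ, besselKer ν s u

lemma norm_besselKer (ν : ℂ) (s u : ℝ) :
    ‖besselKer ν s u‖ = Real.exp (-Real.exp u - s * Real.exp (-u) + ν.re * u) := by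
  unfold besselKer
  rw [Complex.norm_exp, Complex.add_re, Complex.ofReal_re, Complex.re_mul_ofReal]

lemma continuous_besselKer (ν : ℂ) (s : ℝ) : Continuous (besselKer ν s) := by
  unfold besselKer
  fun_prop

lemma besselKer_add_one (ν : ℂ) (s u : ℝ) :
    besselKer (ν + 1) s u = (Real.exp u : ℂ) * besselKer ν s u := by
  unfold besselKer
  rw [Complex.ofReal_exp, ← Complex.exp_add]
  congr 1
  ring

lemma besselKer_sub_one (ν : ℂ) (s u : ℝ) :
    besselKer (ν - 1) s u = (Real.exp (-u) : ℂ) * besselKer ν s u := by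
  unfold besselKer
  rw [Complex.ofReal_exp, ← Complex.exp_add]
  congr 1
  push_cast
  ring

lemma half_sq_le_exp_abs (u : ℝ) : u ^ 2 / 2 ≤ Real.exp |u| := by
  have h := Real.quadratic_le_exp_of_nonneg (abs_nonneg u)
  rw [sq_abs] at h
  linarith [abs_nonneg u]

/-- Domination by a Gaussian, since `e^u + s e^{-u} ≥ min(1,s) u²/2`. -/
lemma integrable_besselKer (ν : ℂ) {s : ℝ} (hs : 0 < s) : Integrable (besselKer ν s) := by
  set m : ℝ := min 1 s
  have hm : 0 < m := lt_min one_pos hs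
  have hb : 0 < ((m / 2 : ℝ) : ℂ).re := by simpa using by positivity
  refine (integrable_cexp_quadratic hb (ν.re : ℂ) 0).mono
    (continuous_besselKer ν s).aestronglyMeasurable (ae_of_all _ fun u => ?_)
  rw [norm_besselKer, Complex.norm_exp]
  have hre : (-((m / 2 : ℝ) : ℂ) * (u : ℂ) ^ 2 + (ν.re : ℂ) * u + 0).re =
      -(m / 2) * u ^ 2 + ν.re * u := by
    have : (-((m / 2 : ℝ) : ℂ) * (u : ℂ) ^ 2 + (ν.re : ℂ) * u + 0) =
      ((-(m / 2) * u ^ 2 + ν.re * u : ℝ) : ℂ) := by push_cast; ring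
    rw [this, Complex.ofReal_re]
  rw [hre, Real.exp_le_exp]
  have key : m * (u ^ 2 / 2) ≤ Real.exp u + s * Real.exp (-u) := by
    have h := half_sq_le_exp_abs u
    have h1 : m ≤ 1 := min_le_left _ _
    have h2 : m ≤ s := min_le_right _ _
    have p1 := Real.exp_pos u
    have p2 := Real.exp_pos (-u)
    have hsq : 0 ≤ u ^ 2 / 2 := by positivity
    rcases le_total 0 u with hu | hu
    · rw [abs_of_nonneg hu] at h
      nlinarith [mul_pos hs p2]
    · rw [abs_of_nonpos hu] at h
      nlinarith [mul_le_mul h2 h hsq hs.le]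
  linarith

lemma hasDerivAt_besselKer (ν : ℂ) (s u : ℝ) :
    HasDerivAt (besselKer ν s)
      (-besselKer (ν + 1) s u + s * besselKer (ν - 1) s u + ν * besselKer ν s u) u := by
  have h1 : HasDerivAt (fun u : ℝ => -Real.exp u - s * Real.exp (-u))
      (-Real.exp u - s * (Real.exp (-u) * -1)) u :=
    (Real.hasDerivAt_exp u).neg.sub (((hasDerivAt_neg u).exp).const_mul s)
  have h2 : HasDerivAt (fun u : ℝ => ν * (u : ℂ)) (ν * 1) u :=
    (Complex.ofRealCLM.hasDerivAt (x := u)).const_mul ν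
  have h := (h1.ofReal_comp.add h2).cexp
  refine HasDerivAt.congr_deriv (f := besselKer ν s) h ?_
  rw [besselKer_add_one, besselKer_sub_one]
  simp only [Pi.add_apply]
  change besselKer ν s u * _ = _
  push_cast
  ring

/-- Integration of the derivative of the integrand over `ℝ`. -/
lemma besselJ_recurrence (ν : ℂ) {s : ℝ} (hs : 0 < s) :
    besselJ (ν + 1) s = ν * besselJ ν s + s * besselJ (ν - 1) s := by
  have i0 := integrable_besselKer ν hs
  have i1 := integrable_besselKer (ν + 1) hs
  have i2 := integrable_besselKer (ν - 1) hs
  have i3 : Integrable fun u => -besselKer (ν + 1) s u + s * besselKer (ν - 1) s u :=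
    i1.neg.add (i2.const_mul _)
  have h := integral_eq_zero_of_hasDerivAt_of_integrable (hasDerivAt_besselKer ν s)
    (i3.add (i0.const_mul _)) i0
  rw [integral_add i3 (i0.const_mul _), integral_add (f := fun u => -besselKer (ν + 1) s u)
    i1.neg (i2.const_mul _), integral_neg, integral_const_mul, integral_const_mul] at h
  unfold besselJ
  linear_combination -h

/-- The substitution `u ↦ log s - u`. -/
lemma besselJ_neg (ν : ℂ) {s : ℝ} (hs : 0 < s) :
    besselJ ν s = (s : ℂ) ^ ν * besselJ (-ν) s := by
  unfold besselJ
  rw [← integral_sub_left_eq_self (besselKer ν s) volume (Real.log s), ← integral_const_mul]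
  refine integral_congr_ae (ae_of_all _ fun u => ?_)
  have hs' : (s : ℂ) ≠ 0 := by exact_mod_cast hs.ne'
  simp only
  unfold besselKer
  rw [Complex.cpow_def_of_ne_zero hs', ← Complex.ofReal_log hs.le, ← Complex.exp_add]
  have e1 : Real.exp (Real.log s - u) = s * Real.exp (-u) := by
    rw [sub_eq_add_neg, Real.exp_add, Real.exp_log hs]
  have e2 : s * Real.exp (-(Real.log s - u)) = Real.exp u := by
    rw [neg_sub, Real.exp_sub, Real.exp_log hs]
    field_simp
  rw [e1, e2]
  congr 1
  push_cast
  ring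

lemma hasDerivAt_besselJ (ν : ℂ) {s : ℝ} (hs : 0 < s) :
    HasDerivAt (besselJ ν) (-besselJ (ν - 1) s) s := by
  have hs2 : 0 < s / 2 := by positivity
  have h := (hasDerivAt_integral_of_dominated_loc_of_deriv_le (μ := volume)
    (F := fun s u => besselKer ν s u) (F' := fun s u => -besselKer (ν - 1) s u)
    (bound := fun u => ‖besselKer (ν - 1) (s / 2) u‖) (x₀ := s) (s := Ioi (s / 2))
    (Ioi_mem_nhds (by linarith))
    (Eventually.of_forall fun t => (continuous_besselKer ν t).aestronglyMeasurable)
    (integrable_besselKer ν hs)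
    (continuous_besselKer (ν - 1) s).neg.aestronglyMeasurable ?_
    (integrable_besselKer (ν - 1) hs2).norm ?_).2
  · rw [integral_neg] at h
    exact h
  · refine ae_of_all _ fun u t ht => ?_
    rw [norm_neg, norm_besselKer, norm_besselKer, Real.exp_le_exp]
    have := mul_le_mul_of_nonneg_right (le_of_lt (mem_Ioi.1 ht)) (Real.exp_pos (-u)).le
    linarith
  · refine ae_of_all _ fun u t _ => ?_
    have h1 : HasDerivAt (fun t : ℝ => -Real.exp u - t * Real.exp (-u))
        (-(1 * Real.exp (-u))) t :=
      ((hasDerivAt_id t).mul_const (Real.exp (-u))).const_sub _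
    have h2 := (h1.ofReal_comp.add_const (ν * (u : ℂ))).cexp
    refine HasDerivAt.congr_deriv (f := fun t => besselKer ν t u) h2 ?_
    rw [besselKer_sub_one]
    change besselKer ν t u * _ = _
    push_cast
    ring

/-! ### The behaviour as `s → 0` -/

lemma abs_exp_smul_Gamma_integrand (ν : ℂ) (u : ℝ) :
    |Real.exp u| • ((Real.exp (-Real.exp u) : ℂ) * (Real.exp u : ℂ) ^ (ν - 1)) =
      besselKer ν 0 u := by
  have h0 : (Real.exp u : ℂ) ≠ 0 := by exact_mod_cast (Real.exp_pos u).ne'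
  rw [abs_of_pos (Real.exp_pos u), Complex.cpow_def_of_ne_zero h0,
    ← Complex.ofReal_log (Real.exp_pos u).le, Real.log_exp, Complex.real_smul]
  unfold besselKer
  rw [Complex.ofReal_exp u, Complex.ofReal_exp, ← Complex.exp_add, ← Complex.exp_add]
  congr 1
  push_cast
  ring

lemma integrable_besselKer_zero {ν : ℂ} (hν : 0 < ν.re) : Integrable (besselKer ν 0) := by
  have h := (integrableOn_image_iff_integrableOn_abs_deriv_smul MeasurableSet.univ
    (fun u _ => (Real.hasDerivAt_exp u).hasDerivWithinAt) Real.exp_injective.injOn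
    (fun x : ℝ => (Real.exp (-x) : ℂ) * (x : ℂ) ^ (ν - 1))).1
    (by rw [image_univ, Real.range_exp]; exact Complex.GammaIntegral_convergent hν)
  simp only [abs_exp_smul_Gamma_integrand] at h
  exact integrableOn_univ.1 h

/-- The substitution `t = e^u` in the Euler integral. -/
lemma besselJ_zero {ν : ℂ} (hν : 0 < ν.re) : besselJ ν 0 = Complex.Gamma ν := by
  have h := integral_image_eq_integral_abs_deriv_smul MeasurableSet.univ
    (fun u _ => (Real.hasDerivAt_exp u).hasDerivWithinAt) Real.exp_injective.injOn
    (fun x : ℝ => (Real.exp (-x) : ℂ) * (x : ℂ) ^ (ν - 1))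
  simp only [abs_exp_smul_Gamma_integrand] at h
  rw [image_univ, Real.range_exp, Measure.restrict_univ] at h
  rw [Complex.Gamma_eq_integral hν]
  exact h.symm

lemma tendsto_besselJ_zero {ν : ℂ} (hν : 0 < ν.re) :
    Tendsto (besselJ ν) (nhdsWithin 0 (Ioi 0)) (nhds (Complex.Gamma ν)) := by
  rw [← besselJ_zero hν]
  refine tendsto_integral_filter_of_dominated_convergence (fun u => ‖besselKer ν 0 u‖)
    (Eventually.of_forall fun s => (continuous_besselKer ν s).aestronglyMeasurable) ?_
    (integrable_besselKer_zero hν).norm (ae_of_all _ fun u => ?_)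
  · filter_upwards [self_mem_nhdsWithin] with s hs
    refine ae_of_all _ fun u => ?_
    rw [norm_besselKer, norm_besselKer, Real.exp_le_exp]
    have := mul_pos (mem_Ioi.1 hs) (Real.exp_pos (-u))
    linarith
  · have hc : Continuous fun s : ℝ => besselKer ν s u := by
      unfold besselKer
      fun_prop
    exact (hc.tendsto 0).mono_left nhdsWithin_le_nhds

/-- By the recurrence `s J_ν = J_{ν+2} - (ν+1) J_{ν+1} → Γ(ν+2) - (ν+1) Γ(ν+1) = 0`. -/
lemma tendsto_mul_besselJ_zero {ν : ℂ} (hν : -1 < ν.re) :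
    Tendsto (fun s : ℝ => (s : ℂ) * besselJ ν s) (nhdsWithin 0 (Ioi 0)) (nhds 0) := by
  have h1 : 0 < (ν + 1).re := by simp; linarith
  have h2 : 0 < (ν + 1 + 1).re := by simp; linarith
  have hne : ν + 1 ≠ 0 := by
    intro h
    rw [h] at h1
    simp at h1
  have h := (tendsto_besselJ_zero h2).sub ((tendsto_besselJ_zero h1).const_mul (ν + 1))
  rw [Complex.Gamma_add_one _ hne, sub_self] at h
  refine h.congr' ?_
  filter_upwards [self_mem_nhdsWithin] with s hs
  rw [besselJ_recurrence (ν + 1) hs, add_sub_cancel_right]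
  ring

/-! ### The connection formula -/

/-- The Wronskian relation for `Re ν > -1`: the left side has zero derivative on `(0, ∞)`
and tends to `Γ(ν+1)/Γ(ν+1)` at `0`. -/
lemma bessel_cross_of_re {ν : ℂ} (hν : -1 < ν.re) {s : ℝ} (hs : 0 < s) :
    besselE ν s * besselJ (ν + 1) s + besselE (ν + 1) s * (s * besselJ ν s) = 1 := by
  set W : ℝ → ℂ := fun s =>
    besselE ν s * besselJ (ν + 1) s + besselE (ν + 1) s * (s * besselJ ν s) with hW
  have hd : ∀ t ∈ Ioi (0 : ℝ), HasDerivAt W 0 t := by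
    intro t ht
    have h := ((hasDerivAt_besselE ν t).comp_ofReal.mul (hasDerivAt_besselJ (ν + 1) ht)).add
      ((hasDerivAt_besselE (ν + 1) t).comp_ofReal.mul
        ((Complex.ofRealCLM.hasDerivAt (x := t)).mul (hasDerivAt_besselJ ν ht)))
    refine HasDerivAt.congr_deriv (f := W) h ?_
    have r1 := besselE_recurrence ν t
    have r2 := besselJ_recurrence ν ht
    have e3 : ν + 1 + 1 = ν + 2 := by ring
    rw [e3, add_sub_cancel_right]
    simp only [Pi.mul_apply, Complex.ofRealCLM_apply, Complex.ofReal_one]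
    rw [r1, r2]
    ring
  have hconst : ∀ t ∈ Ioi (0 : ℝ), W t = W s := fun t ht =>
    isOpen_Ioi.is_const_of_deriv_eq_zero (convex_Ioi (0 : ℝ)).isPreconnected
      (fun t ht => (hd t ht).differentiableAt.differentiableWithinAt)
      (fun t ht => (hd t ht).deriv) ht hs
  have hE : ∀ μ : ℂ, Tendsto (fun t : ℝ => besselE μ t) (nhdsWithin 0 (Ioi 0))
      (nhds (Complex.Gamma (μ + 1))⁻¹) := by
    intro μ
    have h := (hasDerivAt_besselE μ ((0 : ℝ) : ℂ)).comp_ofReal.continuousAt.tendsto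
    rw [Complex.ofReal_zero, besselE_zero] at h
    exact h.mono_left nhdsWithin_le_nhds
  have h1 : 0 < (ν + 1).re := by simp; linarith
  have hlim : Tendsto W (nhdsWithin 0 (Ioi 0)) (nhds 1) := by
    have h := ((hE ν).mul (tendsto_besselJ_zero h1)).add
      ((hE (ν + 1)).mul (tendsto_mul_besselJ_zero hν))
    rwa [inv_mul_cancel₀ (Complex.Gamma_ne_zero_of_re_pos h1), mul_zero, add_zero] at h
  have hlim2 : Tendsto W (nhdsWithin 0 (Ioi 0)) (nhds (W s)) := by
    refine tendsto_const_nhds.congr' ?_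
    filter_upwards [self_mem_nhdsWithin] with t ht
    exact (hconst t ht).symm
  exact tendsto_nhds_unique hlim2 hlim

/-- The left side is unchanged under `ν ↦ ν + 1`, which removes the restriction on `Re ν`. -/
lemma bessel_cross (ν : ℂ) {s : ℝ} (hs : 0 < s) :
    besselE ν s * besselJ (ν + 1) s + besselE (ν + 1) s * (s * besselJ ν s) = 1 := by
  have key : ∀ n : ℕ, ∀ ν : ℂ, -1 < ν.re + n →
      besselE ν s * besselJ (ν + 1) s + besselE (ν + 1) s * (s * besselJ ν s) = 1 := by
    intro n
    induction n with
    | zero => exact fun ν hν => bessel_cross_of_re (by simpa using hν) hs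
    | succ n ih =>
      intro ν hν
      have h := ih (ν + 1) (by
        simp only [Complex.add_re, Complex.one_re]
        push_cast at hν
        linarith)
      have r1 := besselE_recurrence ν s
      have r2 := besselJ_recurrence (ν + 1) hs
      rw [add_sub_cancel_right] at r2
      have e3 : ν + 1 + 1 = ν + 2 := by ring
      rw [e3] at h r2
      rw [r2] at h
      rw [r1]
      linear_combination h
  obtain ⟨n, hn⟩ := exists_nat_gt (-1 - ν.re)
  exact key n ν (by linarith)

/-- Elimination of `J_{ν+1}` between the Wronskian relations for `ν` and `-ν`. -/
lemma besselJ_mul_sin (ν : ℂ) {s : ℝ} (hs : 0 < s) :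
    besselJ ν s * (Complex.sin (π * ν) / π) = besselE (-ν) s - (s : ℂ) ^ ν * besselE ν s := by
  have c1 := bessel_cross ν hs
  have c2 := bessel_cross (-ν) hs
  have w := besselE_wronskian ν s
  have r1 := besselJ_recurrence (-ν) hs
  have r2 := besselE_recurrence (-ν - 1) s
  have e1 : -ν - 1 + 1 = -ν := by ring
  have e2 : -ν - 1 + 2 = -ν + 1 := by ring
  rw [e1, e2] at r2
  have n1 := besselJ_neg ν hs
  have n2 := besselJ_neg (ν + 1) hs
  have e3 : -(ν + 1) = -ν - 1 := by ring
  have hs' : (s : ℂ) ≠ 0 := by exact_mod_cast hs.ne'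
  rw [e3, Complex.cpow_add _ _ hs', Complex.cpow_one] at n2
  have c3 : besselE (-ν) s * besselJ (ν + 1) s + besselE (-ν - 1) s * besselJ ν s =
      (s : ℂ) ^ ν := by
    rw [n2, n1, r2]
    rw [r1] at c2
    linear_combination (s : ℂ) ^ ν * c2
  rw [← w]
  linear_combination besselE (-ν) s * c1 - besselE ν s * c3

/-! ### The integral representation of `K_ν` -/

/-- The right side of `K_ν(x) = (1/2) ∫_ℝ exp(-x cosh u + ν u) du`. -/
noncomputable def besselF (ν : ℂ) (x : ℝ) : ℂ :=
  (1 / 2) * ∫ u : ℝ, Complex.exp (((-(x * Real.cosh u) : ℝ) : ℂ) + ν * u)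

/-- The translation `u ↦ u + log (x/2)`. -/
lemma besselJ_eq_besselF (ν : ℂ) {x : ℝ} (hx : 0 < x) :
    besselJ ν ((x / 2) ^ 2) = 2 * ((x : ℂ) / 2) ^ ν * besselF ν x := by
  have hy : 0 < x / 2 := by positivity
  have hy' : ((x / 2 : ℝ) : ℂ) ≠ 0 := by exact_mod_cast hy.ne'
  have hcast : (x : ℂ) / 2 = ((x / 2 : ℝ) : ℂ) := by push_cast; rfl
  unfold besselJ besselF
  rw [← integral_add_right_eq_self (besselKer ν ((x / 2) ^ 2)) (Real.log (x / 2)), hcast,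
    show ∀ a b : ℂ, 2 * a * (1 / 2 * b) = a * b from fun a b => by ring, ← integral_const_mul]
  refine integral_congr_ae (ae_of_all _ fun u => ?_)
  simp only
  unfold besselKer
  rw [Complex.cpow_def_of_ne_zero hy', ← Complex.ofReal_log hy.le, ← Complex.exp_add]
  have e1 : -Real.exp (u + Real.log (x / 2)) -
      (x / 2) ^ 2 * Real.exp (-(u + Real.log (x / 2))) = -(x * Real.cosh u) := by
    rw [neg_add, Real.exp_add, Real.exp_add, Real.exp_neg (Real.log _), Real.exp_log hy,
      Real.cosh_eq]
    field_simp
    ring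
  rw [e1]
  congr 1
  push_cast
  ring

lemma besselF_eq_of_sin_ne_zero {ν : ℂ} {x : ℝ} (hx : 0 < x)
    (hν : Complex.sin (ν * (π : ℂ)) ≠ 0) :
    ((π : ℂ) / (2 * Complex.sin (ν * (π : ℂ)))) * (besselI (-ν) x - besselI ν x) =
      besselF ν x := by
  have hy : 0 < x / 2 := by positivity
  have hs : 0 < (x / 2) ^ 2 := by positivity
  have hpi : (π : ℂ) ≠ 0 := by exact_mod_cast Real.pi_ne_zero
  have hy' : (x : ℂ) / 2 ≠ 0 := by simp [hx.ne']
  have h := besselJ_mul_sin ν hs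
  rw [besselJ_eq_besselF ν hx, mul_comm (π : ℂ) ν] at h
  have hpow : (((x / 2) ^ 2 : ℝ) : ℂ) ^ ν = ((x : ℂ) / 2) ^ ν * ((x : ℂ) / 2) ^ ν := by
    rw [pow_two, Complex.ofReal_mul, Complex.mul_cpow_ofReal_nonneg hy.le hy.le]
    push_cast
    rfl
  rw [hpow] at h
  push_cast at h
  rw [besselI_eq_besselE _ hx, besselI_eq_besselE _ hx, Complex.cpow_neg]
  have hP : ((x : ℂ) / 2) ^ ν ≠ 0 := by
    rw [Complex.cpow_def_of_ne_zero hy']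
    exact Complex.exp_ne_zero _
  generalize ((x : ℂ) / 2) ^ ν = P at *
  generalize besselE (-ν) (((x : ℂ) / 2) ^ 2) = A at *
  generalize besselE ν (((x : ℂ) / 2) ^ 2) = B at *
  generalize Complex.sin (ν * (π : ℂ)) = S at *
  have hA : A = 2 * P * besselF ν x * (S / π) + P * P * B := by linear_combination -h
  rw [hA]
  field_simp
  ring

lemma half_sq_le_cosh_sub_one (u : ℝ) : u ^ 2 / 2 ≤ Real.cosh u - 1 := by
  have h1 : Real.cosh u = 1 + 2 * Real.sinh (u / 2) ^ 2 := by
    have h := Real.cosh_two_mul (u / 2)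
    rw [mul_div_cancel₀ u (two_ne_zero)] at h
    rw [h, Real.cosh_sq]
    ring
  have h2 : (u / 2) ^ 2 ≤ Real.sinh (u / 2) ^ 2 := by
    rcases le_total 0 (u / 2) with h | h
    · exact pow_le_pow_left₀ h (Real.self_le_sinh_iff.2 h) 2
    · nlinarith [Real.sinh_le_self_iff.2 h]
  linarith [h1, h2, show (u / 2) ^ 2 = u ^ 2 / 4 by ring]

/-- The common dominating function for continuity in `ν` and for the Laplace method. -/
lemma integrable_gaussian_exp_abs {b : ℝ} (hb : 0 < b) (R : ℝ) :
    Integrable fun u : ℝ => Real.exp (-b * u ^ 2 + R * |u|) := by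
  have hb' : 0 < ((b : ℝ) : ℂ).re := by simpa using hb
  have key : ∀ c : ℝ, Integrable fun u : ℝ => Real.exp (-b * u ^ 2 + c * u) := by
    intro c
    refine ((integrable_cexp_quadratic hb' (c : ℂ) 0).norm).congr (ae_of_all _ fun u => ?_)
    have : (-(b : ℂ) * (u : ℂ) ^ 2 + (c : ℂ) * u + 0) =
      ((-b * u ^ 2 + c * u : ℝ) : ℂ) := by push_cast; ring
    simp only
    rw [this, Complex.norm_exp, Complex.ofReal_re]
  refine ((key R).add (key (-R))).mono (by fun_prop) (ae_of_all _ fun u => ?_)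
  have p1 := Real.exp_pos (-b * u ^ 2 + R * u)
  have p2 := Real.exp_pos (-b * u ^ 2 + -R * u)
  simp only [Pi.add_apply]
  rw [Real.norm_of_nonneg (Real.exp_pos _).le, Real.norm_of_nonneg (by positivity)]
  rcases abs_cases u with ⟨h, _⟩ | ⟨h, _⟩
  · rw [h]; linarith
  · rw [h, mul_neg, ← neg_mul]; linarith

lemma continuous_besselF {x : ℝ} (hx : 0 < x) : Continuous fun ν => besselF ν x := by
  unfold besselF
  refine continuous_const.mul ?_
  rw [continuous_iff_continuousAt]
  intro ν
  refine tendsto_integral_filter_of_dominated_convergence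
    (fun u => Real.exp (-(x / 2) * u ^ 2 + (‖ν‖ + 1) * |u|))
    (Eventually.of_forall fun μ => Continuous.aestronglyMeasurable (by fun_prop)) ?_
    (integrable_gaussian_exp_abs (by positivity) _) (ae_of_all _ fun u => ?_)
  · filter_upwards [Metric.ball_mem_nhds ν one_pos] with μ hμ
    refine ae_of_all _ fun u => ?_
    rw [Complex.norm_exp, Complex.add_re, Complex.ofReal_re, Complex.re_mul_ofReal,
      Real.exp_le_exp]
    have h1 : ‖μ‖ ≤ ‖ν‖ + 1 := by
      rw [mem_ball_iff_norm] at hμ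
      linarith [norm_le_norm_add_norm_sub' μ ν]
    have h2 : μ.re * u ≤ (‖ν‖ + 1) * |u| := by
      refine (le_abs_self _).trans ?_
      rw [abs_mul]
      exact mul_le_mul_of_nonneg_right ((Complex.abs_re_le_norm μ).trans h1) (abs_nonneg u)
    have h3 := mul_le_mul_of_nonneg_left (half_sq_le_cosh_sub_one u) hx.le
    linarith
  · exact Continuous.tendsto (by fun_prop) ν

lemma besselK_eq_besselF (ν : ℂ) {x : ℝ} (hx : 0 < x) : besselK ν x = besselF ν x := by
  have hpi : (π : ℂ) ≠ 0 := by exact_mod_cast Real.pi_ne_zero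
  have hsin : ∀ μ : ℂ, (¬∃ n : ℤ, μ = (n : ℂ)) → Complex.sin (μ * (π : ℂ)) ≠ 0 := by
    intro μ hμ h
    obtain ⟨k, hk⟩ := Complex.sin_eq_zero_iff.1 h
    exact hμ ⟨k, mul_right_cancel₀ hpi hk⟩
  unfold besselK
  split_ifs with h
  · obtain ⟨n, rfl⟩ := h
    refine Tendsto.limUnder_eq ?_
    refine (((continuous_besselF hx).tendsto (n : ℂ)).mono_left
      (nhdsWithin_le_nhds (s := {(n : ℂ)}ᶜ))).congr' ?_
    filter_upwards [self_mem_nhdsWithin,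
      mem_nhdsWithin_of_mem_nhds (Metric.ball_mem_nhds (n : ℂ) one_pos)] with μ h1 h2
    refine (besselF_eq_of_sin_ne_zero hx (hsin μ ?_)).symm
    rintro ⟨k, rfl⟩
    rw [mem_ball_iff_norm, ← Int.cast_sub, Complex.norm_intCast] at h2
    have h3 : |k - n| < 1 := by exact_mod_cast h2
    have h4 : k = n := by
      have := Int.abs_lt_one_iff.1 h3
      omega
    exact h1 (by rw [h4]; rfl)
  · exact besselF_eq_of_sin_ne_zero hx (hsin ν h)

/-! ### The Laplace method -/

/-- The substitution `u = v / √x`. -/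
lemma besselF_eq_rescaled (ν : ℂ) {x : ℝ} (hx : 0 < x) :
    besselF ν x = (1 / 2) * Complex.exp (-(x : ℂ)) / (Real.sqrt x : ℂ) *
      ∫ v : ℝ, Complex.exp (((-(x * (Real.cosh (v / Real.sqrt x) - 1)) : ℝ) : ℂ) +
        ν * ((v / Real.sqrt x : ℝ) : ℂ)) := by
  have hr : 0 < Real.sqrt x := Real.sqrt_pos.2 hx
  have hr' : (Real.sqrt x : ℂ) ≠ 0 := by exact_mod_cast hr.ne'
  have h := Measure.integral_comp_div (fun u : ℝ =>
    Complex.exp (((-(x * (Real.cosh u - 1)) : ℝ) : ℂ) + ν * (u : ℂ))) (Real.sqrt x)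
  rw [h, abs_of_pos hr, Complex.real_smul]
  unfold besselF
  have h2 : ∀ I : ℂ, 1 / 2 * Complex.exp (-(x : ℂ)) / (Real.sqrt x : ℂ) *
      ((Real.sqrt x : ℂ) * I) = 1 / 2 * (Complex.exp (-(x : ℂ)) * I) := by
    intro I
    field_simp
  rw [h2, ← integral_const_mul (Complex.exp (-(x : ℂ)))]
  refine congrArg (fun I : ℂ => 1 / 2 * I) (integral_congr_ae (ae_of_all _ fun u => ?_))
  simp only
  rw [← Complex.exp_add]
  congr 1
  push_cast
  ring

lemma tendsto_mul_cosh_sub_one (v : ℝ) :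
    Tendsto (fun x : ℝ => x * (Real.cosh (v / Real.sqrt x) - 1)) atTop (nhds (v ^ 2 / 2)) := by
  -- `cosh w - 1 = 2 sinh² (w/2)`, and `r sinh (v/(2r)) → v/2` is the derivative of `sinh` at `0`.
  have h1 : Tendsto (fun r : ℝ => r * Real.sinh (v / 2 * r⁻¹)) atTop (nhds (v / 2)) := by
    have hd : HasDerivAt (fun t : ℝ => Real.sinh (v / 2 * t)) (v / 2) 0 := by
      have h := ((hasDerivAt_id (0 : ℝ)).const_mul (v / 2)).sinh
      simpa using h
    have h := hd.tendsto_slope_zero_right.comp tendsto_inv_atTop_nhdsGT_zero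
    simpa [Function.comp_def] using h
  have h2 := ((h1.pow 2).const_mul 2).comp Real.tendsto_sqrt_atTop
  rw [show 2 * (v / 2) ^ 2 = v ^ 2 / 2 by ring] at h2
  refine h2.congr' ?_
  filter_upwards [eventually_gt_atTop 0] with x hx
  simp only [Function.comp_def]
  have hc := Real.cosh_two_mul (v / 2 * (Real.sqrt x)⁻¹)
  rw [show 2 * (v / 2 * (Real.sqrt x)⁻¹) = v / Real.sqrt x by ring, Real.cosh_sq] at hc
  rw [hc, mul_pow, Real.sq_sqrt hx.le]
  ring

lemma tendsto_rescaled_integral (ν : ℂ) :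
    Tendsto (fun x : ℝ =>
      ∫ v : ℝ, Complex.exp (((-(x * (Real.cosh (v / Real.sqrt x) - 1)) : ℝ) : ℂ) +
        ν * ((v / Real.sqrt x : ℝ) : ℂ))) atTop (nhds (Real.sqrt (2 * π) : ℂ)) := by
  have hg : (Real.sqrt (2 * π) : ℂ) = ∫ v : ℝ, ((Real.exp (-(1 / 2) * v ^ 2) : ℝ) : ℂ) := by
    rw [integral_complex_ofReal, integral_gaussian]
    congr 2
    ring
  rw [hg]
  refine tendsto_integral_filter_of_dominated_convergence
    (fun v => Real.exp (-(1 / 2) * v ^ 2 + ‖ν‖ * |v|))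
    (Eventually.of_forall fun x => Continuous.aestronglyMeasurable (by fun_prop)) ?_
    (integrable_gaussian_exp_abs (by norm_num) _) (ae_of_all _ fun v => ?_)
  · filter_upwards [eventually_ge_atTop 1] with x hx
    refine ae_of_all _ fun v => ?_
    have hx0 : 0 < x := by linarith
    have hr : 1 ≤ Real.sqrt x := Real.one_le_sqrt.2 hx
    rw [Complex.norm_exp, Complex.add_re, Complex.ofReal_re, Complex.re_mul_ofReal,
      Real.exp_le_exp]
    have h2 : ν.re * (v / Real.sqrt x) ≤ ‖ν‖ * |v| := by
      refine (le_abs_self _).trans ?_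
      rw [abs_mul, abs_div, abs_of_pos (by linarith : 0 < Real.sqrt x)]
      exact mul_le_mul (Complex.abs_re_le_norm ν) (div_le_self (abs_nonneg v) hr)
        (by positivity) (norm_nonneg _)
    have h3 := mul_le_mul_of_nonneg_left (half_sq_le_cosh_sub_one (v / Real.sqrt x)) hx0.le
    rw [div_pow, Real.sq_sqrt hx0.le] at h3
    have h4 : x * (v ^ 2 / x / 2) = 1 / 2 * v ^ 2 := by field_simp
    linarith
  · have h1 := (Complex.continuous_ofReal.tendsto _).comp (tendsto_mul_cosh_sub_one v).neg
    have h2 : Tendsto (fun x : ℝ => v / Real.sqrt x) atTop (nhds 0) :=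
      Real.tendsto_sqrt_atTop.const_div_atTop v
    have h3 := ((Complex.continuous_ofReal.tendsto _).comp h2).const_mul ν
    have h4 := (h1.add h3).cexp
    rw [Complex.ofReal_zero, mul_zero, add_zero, ← Complex.ofReal_exp,
      show -(v ^ 2 / 2) = -(1 / 2) * v ^ 2 by ring] at h4
    exact h4

/-- For any `ν ∈ ℂ`, `K_ν(x) / ((π/(2x))^{1/2} e^{-x}) → 1` as `x → +∞` over positive reals. -/
theorem besselK_asymptotic (ν : ℂ) :
    Tendsto (fun x : ℝ => besselK ν (x : ℂ) /
        ((Real.sqrt (Real.pi / (2 * x)) : ℂ) * Complex.exp (-(x : ℂ))))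
      atTop (nhds 1) := by
  have hc : Real.sqrt (2 * π) ≠ 0 := (Real.sqrt_pos.2 (by positivity)).ne'
  have hc' : (Real.sqrt (2 * π) : ℂ) ≠ 0 := by exact_mod_cast hc
  have h := (tendsto_rescaled_integral ν).div_const (Real.sqrt (2 * π) : ℂ)
  rw [div_self hc'] at h
  refine h.congr' ?_
  filter_upwards [eventually_gt_atTop 0] with x hx
  rw [besselK_eq_besselF ν hx, besselF_eq_rescaled ν hx]
  have hs : Real.sqrt (π / (2 * x)) = Real.sqrt (2 * π) / (2 * Real.sqrt x) := by
    rw [show π / (2 * x) = 2 * π / (2 ^ 2 * x) by field_simp,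
      Real.sqrt_div (by positivity), Real.sqrt_mul (by positivity) x,
      Real.sqrt_sq (by norm_num)]
  rw [hs]
  generalize (∫ v : ℝ, Complex.exp (((-(x * (Real.cosh (v / Real.sqrt x) - 1)) : ℝ) : ℂ) +
        ν * ((v / Real.sqrt x : ℝ) : ℂ))) = I
  have hr : (Real.sqrt x : ℂ) ≠ 0 := by exact_mod_cast (Real.sqrt_pos.2 hx).ne'
  have he := Complex.exp_ne_zero (-(x : ℂ))
  push_cast
  field_simp
end

section
/- For all real x > 0, the modified Bessel function of the second kind of order zero satisfies K₀(x) ≤ 1 + log 2 + |log x|. -/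
/-!
With `s = x² / 4`, write `I_ν(x) = (x/2)^ν ∑ sⁿ / (n! Γ(n+ν+1))`. This series converges locally
uniformly in `ν` near `0`, so `I_ν(x)` is differentiable there and the limit defining `K₀(x)` is
`-∂I_ν(x)/∂ν` at `ν = 0`. The known values of `Γ'` at positive integers turn this into the
classical series `2 K₀(x) = 2 ∑ Hₙ sⁿ/n!² - (2γ + log s) ∑ sⁿ/n!²` (`besselK_zero_eq`); in
particular `K₀(x)` is real.

The series is useless for bounds at large `x`, so it is identified with the integral
`f(s) = ∫₀^∞ exp(-t - s/t) dt/t` (`mom_one_eq_serK`). Both functions solve `(s y')' = y` on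
`(0, ∞)`. For the integral, put `A(s) = ∫₀^∞ exp(-t - s/t) dt`; then `A' = -f`, and the substitution
`t ↦ s/t` gives `s f' = -A`. Integration by parts against `log t` and the same substitution give
`f + A log s = 2 ∫₀^∞ log t · exp(-t - s/t) dt`, which tends to `2 Γ'(1) = -2γ` as `s → 0`. The
same asymptotics hold for the series, so the difference `e` of the two solutions has vanishing
Wronskian with `P(s) = ∑ sⁿ/n!²`. Hence `e/P` is constant, and its limit at `0` is `0`.

Finally the integrand of `f` is at most `(s/t²) e^{-s/t}` for `t ≤ s`, at most `1/t` for
`s < t ≤ 1`, and at most `e^{-t}` for `t ≥ 1`, whence `f(s) ≤ 2 + |log s|` (`mom_one_le`).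
-/

open Filter Set MeasureTheory
open scoped Real Classical

open scoped Topology Nat
namespace BesselKZero

local notation "γ" => Real.eulerMascheroniConstant

/-! ### The series for `K₀` -/

/-- A bound for `1/Γ(n+ν+1)` uniform in `n` and `|ν| < 1/2`, by compactness for `n = 0` and the
recurrence `1/Γ(z) = z/Γ(z+1)`. -/
lemma exists_bound_inv_Gamma :
    ∃ C : ℝ, ∀ (n : ℕ) (ν : ℂ), ν ∈ Metric.ball (0 : ℂ) (1 / 2) →
      ‖(Complex.Gamma ((n : ℂ) + ν + 1))⁻¹‖ ≤ C := by
  obtain ⟨M, hM⟩ := (isCompact_closedBall (0 : ℂ) (1 / 2)).exists_bound_of_continuousOn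
    (f := fun ν : ℂ => (Complex.Gamma (ν + 1))⁻¹)
    ((Complex.differentiable_one_div_Gamma.continuous.comp
      (continuous_add_const (1 : ℂ))).continuousOn)
  have hM0 : 0 ≤ M := (norm_nonneg _).trans (hM 0 (by simp))
  refine ⟨2 * M, fun n ν hν => ?_⟩
  have hν' : ‖ν‖ < 1 / 2 := by simpa using hν
  have hstep (n : ℕ) : ((n : ℝ) + 1 / 2) * ‖(Complex.Gamma (((n + 1 : ℕ) : ℂ) + ν + 1))⁻¹‖
      ≤ ‖(Complex.Gamma ((n : ℂ) + ν + 1))⁻¹‖ := by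
    rw [Complex.one_div_Gamma_eq_self_mul_one_div_Gamma_add_one ((n : ℂ) + ν + 1), norm_mul,
      show ((n + 1 : ℕ) : ℂ) + ν + 1 = (n : ℂ) + ν + 1 + 1 by push_cast; ring]
    refine mul_le_mul_of_nonneg_right ?_ (norm_nonneg _)
    have h := norm_sub_le ((n : ℂ) + ν + 1) ν
    rw [show (n : ℂ) + ν + 1 - ν = ((n + 1 : ℕ) : ℂ) by push_cast; ring, Complex.norm_natCast] at h
    push_cast at h
    linarith
  have h0 : ‖(Complex.Gamma (((0 : ℕ) : ℂ) + ν + 1))⁻¹‖ ≤ M := by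
    simpa using hM ν (Metric.ball_subset_closedBall hν)
  rcases n with _ | n
  · linarith
  · induction n with
    | zero =>
      have := hstep 0
      simp only [Nat.cast_zero, zero_add] at this h0 ⊢
      linarith
    | succ n ih =>
      have := hstep (n + 1)
      have hn : (1 : ℝ) ≤ ((n + 1 : ℕ) : ℝ) + 1 / 2 := by push_cast; linarith [n.cast_nonneg (α := ℝ)]
      refine le_trans ?_ (this.trans ih)
      exact le_mul_of_one_le_left (norm_nonneg _) hn

lemma hasDerivAt_inv_Gamma (n : ℕ) :
    HasDerivAt (fun ν : ℂ => (Complex.Gamma ((n : ℂ) + ν + 1))⁻¹)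
      ((γ - (harmonic n : ℂ)) / (n ! : ℂ)) 0 := by
  have h := Complex.hasDerivAt_Gamma_nat n
  have h2 : HasDerivAt (fun ν : ℂ => (n : ℂ) + ν + 1) 1 0 :=
    ((hasDerivAt_id (0 : ℂ)).const_add (n : ℂ)).add_const 1
  have h3 := (HasDerivAt.comp (0 : ℂ) (h₂ := Complex.Gamma) (by simpa using h) h2).inv
    (by simp [Complex.Gamma_nat_eq_factorial, Nat.factorial_ne_zero])
  refine h3.congr_deriv ?_
  have : (n ! : ℂ) ≠ 0 := by exact_mod_cast Nat.factorial_ne_zero n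
  simp only [Function.comp, add_zero, Complex.Gamma_nat_eq_factorial]
  field_simp
  ring

/-- The sum of the real power series with coefficients `a`. -/
noncomputable def ser (a : ℕ → ℝ) (s : ℝ) : ℝ := ∑' n : ℕ, a n * s ^ n

/-- The coefficients of the derivative of the power series with coefficients `a`. -/
def dcoef (a : ℕ → ℝ) (n : ℕ) : ℝ := ((n : ℝ) + 1) * a (n + 1)

/-- The coefficients `1 / n!²`. The power series is `P(s) = ∑ sⁿ / n!²`, so that
`I₀(x) = P(x² / 4)`. -/
noncomputable def coefP (n : ℕ) : ℝ := 1 / (n ! : ℝ) ^ 2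

/-- The coefficients `Hₙ / n!²`, where `Hₙ` is the `n`-th harmonic number. -/
noncomputable def coefH (n : ℕ) : ℝ := (harmonic n : ℝ) / (n ! : ℝ) ^ 2

lemma harmonic_nonneg (n : ℕ) : (0 : ℝ) ≤ (harmonic n : ℝ) := by
  exact_mod_cast Finset.sum_nonneg fun i _ => by positivity

lemma harmonic_le (n : ℕ) : (harmonic n : ℝ) ≤ n := by
  induction n with
  | zero => simp
  | succ n ih =>
    rw [harmonic_succ]
    push_cast
    have : ((n : ℝ) + 1)⁻¹ ≤ 1 := inv_le_one_of_one_le₀ (by linarith [n.cast_nonneg (α := ℝ)])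
    linarith

lemma succ_le_two_mul_factorial (n : ℕ) : (n : ℝ) + 1 ≤ 2 * (n ! : ℝ) := by
  have := Nat.self_le_factorial n
  have h1 := Nat.factorial_pos n
  have : n + 1 ≤ 2 * n ! := by omega
  exact_mod_cast this

lemma bound_P (n : ℕ) : |coefP n| ≤ 2 / (n ! : ℝ) := by
  have h := succ_le_two_mul_factorial n
  have h1 : (0 : ℝ) < n ! := by positivity
  rw [coefP, abs_of_nonneg (by positivity), div_le_div_iff₀ (by positivity) h1]
  nlinarith [n.cast_nonneg (α := ℝ)]

lemma bound_H (n : ℕ) : |coefH n| ≤ 2 / (n ! : ℝ) := by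
  have h := succ_le_two_mul_factorial n
  have h1 : (0 : ℝ) < n ! := by positivity
  rw [coefH, abs_of_nonneg (div_nonneg (harmonic_nonneg n) (by positivity)),
    div_le_div_iff₀ (by positivity) h1]
  nlinarith [harmonic_le n]

lemma summable_of_bound {a : ℕ → ℝ} {C : ℝ} (ha : ∀ n, |a n| ≤ C / (n ! : ℝ)) (s : ℝ) :
    Summable fun n => a n * s ^ n := by
  refine Summable.of_norm_bounded ((Real.summable_pow_div_factorial |s|).mul_left C) fun n => ?_
  rw [Real.norm_eq_abs, abs_mul, abs_pow]
  calc |a n| * |s| ^ n ≤ C / (n ! : ℝ) * |s| ^ n := by gcongr; exact ha n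
    _ = _ := by ring

/-- The classical series for `2 K₀(x)`, as a function of `s = x² / 4`. -/
noncomputable def serK (s : ℝ) : ℝ := 2 * ser coefH s - (2 * γ + Real.log s) * ser coefP s

lemma hasDerivAt_besselI (x : ℝ) (hx : 0 < x) :
    HasDerivAt (fun ν : ℂ => besselI ν x) (((-(serK ((x / 2) ^ 2) / 2) : ℝ)) : ℂ) 0 := by
  obtain ⟨C, hC⟩ := exists_bound_inv_Gamma
  set s : ℝ := (x / 2) ^ 2 with hs
  have hx2 : ((x : ℂ) / 2) ≠ 0 := by simpa using hx.ne'
  have hs0 : 0 < s := by positivity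
  let F : ℕ → ℂ → ℂ := fun n ν => ((s : ℂ) ^ n / (n ! : ℂ)) * (Complex.Gamma ((n : ℂ) + ν + 1))⁻¹
  have hI : (fun ν : ℂ => besselI ν x) = fun ν => ((x : ℂ) / 2) ^ ν * ∑' n, F n ν := by
    ext ν
    rw [besselI, ← tsum_mul_left]
    refine tsum_congr fun n => ?_
    rw [Complex.cpow_add _ _ hx2, show (2 * (n : ℂ)) = ((2 * n : ℕ) : ℂ) by push_cast; ring,
      Complex.cpow_natCast, pow_mul]
    simp only [F, hs]
    push_cast
    rw [div_eq_mul_inv, mul_inv]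
    ring
  have hu : Summable fun n : ℕ => C * (s ^ n / (n ! : ℝ)) :=
    (Real.summable_pow_div_factorial s).mul_left C
  have hFd : ∀ n, DifferentiableOn ℂ (F n) (Metric.ball 0 (1 / 2)) := fun n => by
    refine Differentiable.differentiableOn (Differentiable.const_mul ?_ _)
    exact Complex.differentiable_one_div_Gamma.comp (by fun_prop)
  have hFle : ∀ n, ∀ ν ∈ Metric.ball (0 : ℂ) (1 / 2), ‖F n ν‖ ≤ C * (s ^ n / (n ! : ℝ)) := by
    intro n ν hν
    simp only [F]
    rw [norm_mul, norm_div, norm_pow, Complex.norm_natCast, Complex.norm_real,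
      Real.norm_of_nonneg hs0.le, mul_comm]
    gcongr
    exact hC n ν hν
  have h0 : (0 : ℂ) ∈ Metric.ball (0 : ℂ) (1 / 2) := by simp
  have hsum := Complex.hasSum_deriv_of_summable_norm hu hFd Metric.isOpen_ball hFle h0
  have hdiff := ((Complex.differentiableOn_tsum_of_summable_norm hu hFd Metric.isOpen_ball
    hFle).differentiableAt (Metric.isOpen_ball.mem_nhds h0)).hasDerivAt
  have hP := (summable_of_bound bound_P s).hasSum
  have hH := (summable_of_bound bound_H s).hasSum
  have hderiv : deriv (fun ν => ∑' n, F n ν) 0 = ((γ * ser coefP s - ser coefH s : ℝ) : ℂ) := by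
    refine hsum.unique ?_
    have := Complex.hasSum_ofReal.mpr ((hP.mul_left γ).sub hH)
    refine this.congr_fun fun n => ?_
    rw [((hasDerivAt_inv_Gamma n).const_mul ((s : ℂ) ^ n / (n ! : ℂ))).deriv]
    simp only [coefP, coefH]
    push_cast
    ring
  have hval : ∑' n, F n 0 = ((ser coefP s : ℝ) : ℂ) := by
    refine HasSum.tsum_eq ?_
    refine (Complex.hasSum_ofReal.mpr hP).congr_fun fun n => ?_
    simp only [F, coefP, add_zero, Complex.Gamma_nat_eq_factorial]
    push_cast
    rw [div_eq_mul_inv, div_eq_mul_inv]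
    ring
  have hpow : HasDerivAt (fun ν : ℂ => ((x : ℂ) / 2) ^ ν) (Real.log (x / 2) : ℂ) 0 := by
    have := (hasDerivAt_id (0 : ℂ)).const_cpow (c := (x : ℂ) / 2) (Or.inl hx2)
    refine this.congr_deriv ?_
    rw [Complex.ofReal_log (by positivity)]
    simp
  rw [hI]
  refine (hpow.mul hdiff).congr_deriv ?_
  rw [hderiv, hval, serK, hs, Real.log_pow]
  simp only [Complex.cpow_zero]
  push_cast
  ring

lemma besselK_zero_eq (x : ℝ) (hx : 0 < x) :
    besselK 0 (x : ℂ) = ((serK ((x / 2) ^ 2) / 2 : ℝ) : ℂ) := by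
  rw [besselK, if_pos ⟨0, by simp⟩]
  apply Tendsto.limUnder_eq
  have hI := hasDerivAt_besselI x hx
  set k : ℝ := serK ((x / 2) ^ 2) / 2
  have hneg : HasDerivAt (fun ν : ℂ => besselI (-ν) x) ((k : ℝ) : ℂ) 0 := by
    have := HasDerivAt.comp (0 : ℂ) (h₂ := fun ν : ℂ => besselI ν x) (by simpa using hI)
      (hasDerivAt_neg (0 : ℂ))
    refine this.congr_deriv ?_
    ring
  have hd := hasDerivAt_iff_tendsto_slope.mp (hneg.sub hI)
  have hsin : HasDerivAt (fun μ : ℂ => Complex.sin (μ * (Real.pi : ℂ))) (Real.pi : ℂ) 0 := by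
    have := ((hasDerivAt_id (0 : ℂ)).mul_const (Real.pi : ℂ)).csin
    simpa using this
  have hs := hasDerivAt_iff_tendsto_slope.mp hsin
  have hpi : (Real.pi : ℂ) ≠ 0 := by exact_mod_cast Real.pi_ne_zero
  have := ((hd.div hs hpi).const_mul ((Real.pi : ℂ) / 2))
  have hlim : (Real.pi : ℂ) / 2 * (((k : ℂ) - ((-k : ℝ) : ℂ)) / (Real.pi : ℂ)) = (k : ℂ) := by
    push_cast
    field_simp
    ring
  rw [hlim] at this
  refine this.congr' ?_
  filter_upwards [self_mem_nhdsWithin] with μ hμ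
  have hμ0 : μ ≠ 0 := hμ
  simp only [slope_def_field, Pi.sub_apply, Pi.div_apply, neg_zero, sub_self, sub_zero, zero_mul,
    Complex.sin_zero]
  rw [div_div_div_cancel_right₀ hμ0]
  simp only [div_eq_mul_inv, mul_inv]
  ring

/-! ### The differential equation for the series -/

lemma bound_dcoef {a : ℕ → ℝ} {C : ℝ} (ha : ∀ n, |a n| ≤ C / (n ! : ℝ)) (n : ℕ) :
    |dcoef a n| ≤ C / (n ! : ℝ) := by
  have h := ha (n + 1)
  have h1 : (0 : ℝ) < n ! := by positivity
  rw [Nat.factorial_succ] at h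
  push_cast at h
  rw [dcoef, abs_mul, abs_of_pos (by positivity)]
  calc ((n : ℝ) + 1) * |a (n + 1)| ≤ ((n : ℝ) + 1) * (C / (((n : ℝ) + 1) * (n ! : ℝ))) := by gcongr
    _ = C / (n ! : ℝ) := by field_simp

lemma hasDerivAt_ser {a : ℕ → ℝ} {C : ℝ} (ha : ∀ n, |a n| ≤ C / (n ! : ℝ)) (s : ℝ) :
    HasDerivAt (ser a) (ser (dcoef a) s) s := by
  set R : ℝ := |s| + 1
  have hR : 0 < R := by positivity
  let gder : ℕ → ℝ → ℝ := fun n y => a n * ((n : ℝ) * y ^ (n - 1))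
  have hshift (n : ℕ) (y : ℝ) : gder (n + 1) y = dcoef a n * y ^ n := by
    simp only [gder, dcoef, Nat.add_sub_cancel]
    push_cast
    ring
  let u : ℕ → ℝ := fun n => |a n| * ((n : ℝ) * R ^ (n - 1))
  have hu : Summable u := by
    rw [← summable_nat_add_iff 1]
    refine (summable_of_bound (a := fun n => |dcoef a n|)
      (fun n => by simpa using bound_dcoef ha n) R).congr fun n => ?_
    simp only [u, dcoef, Nat.add_sub_cancel, abs_mul, abs_of_pos (by positivity : (0 : ℝ) < n + 1)]
    push_cast
    ring
  have hs : s ∈ Metric.ball (0 : ℝ) R := by simp [R]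
  have h := hasDerivAt_tsum_of_isPreconnected (g := fun n y => a n * y ^ n) (g' := gder) hu
    Metric.isOpen_ball (convex_ball (0 : ℝ) R).isPreconnected
    (fun n y _ => (hasDerivAt_pow n y).const_mul (a n))
    (fun n y hy => by
      have hy' : |y| ≤ R := by simpa using (Metric.mem_ball.mp hy).le
      simp only [gder, u, norm_mul, norm_pow, Real.norm_eq_abs, Nat.abs_cast]
      gcongr)
    hs (summable_of_bound ha s) hs
  refine h.congr_deriv ?_
  have hsg : Summable fun n => gder n s := by
    rw [← summable_nat_add_iff 1]
    exact (summable_of_bound (bound_dcoef ha) s).congr fun n => (hshift n s).symm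
  rw [hsg.tsum_eq_zero_add]
  simp only [hshift, ser]
  simp [gder]

/-- On coefficients, the operator taking `y` to the derivative of `s y'(s)` multiplies by
`(n+1)²` and shifts the index by one. -/
lemma hasDerivAt_mul_ser {a : ℕ → ℝ} {C : ℝ} (ha : ∀ n, |a n| ≤ C / (n ! : ℝ)) (s : ℝ) :
    HasDerivAt (fun s => s * ser (dcoef a) s)
      (ser (fun n => ((n : ℝ) + 1) ^ 2 * a (n + 1)) s) s := by
  have hb := bound_dcoef ha
  have hbb := bound_dcoef hb
  refine ((hasDerivAt_id s).mul (hasDerivAt_ser hb s)).congr_deriv ?_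
  simp only [id, one_mul]
  -- `s · ∑ (n+1) dₙ₊₁ sⁿ = ∑ n dₙ sⁿ`
  have h2 : HasSum (fun n : ℕ => (n : ℝ) * dcoef a n * s ^ n) (s * ser (dcoef (dcoef a)) s) := by
    rw [← hasSum_nat_add_iff' 1]
    simp only [Finset.range_one, Finset.sum_singleton, Nat.cast_zero, zero_mul, sub_zero]
    refine ((summable_of_bound hbb s).hasSum.mul_left s).congr_fun fun n => ?_
    rw [show dcoef (dcoef a) n = ((n : ℝ) + 1) * dcoef a (n + 1) from rfl]
    push_cast
    ring
  have h1 : HasSum (fun n : ℕ => dcoef a n * s ^ n) (ser (dcoef a) s) :=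
    (summable_of_bound hb s).hasSum
  refine ((h1.add h2).congr_fun fun n => ?_).tsum_eq.symm
  simp only [dcoef]
  ring

lemma hasDerivAt_mul_serP (s : ℝ) :
    HasDerivAt (fun s => s * ser (dcoef coefP) s) (ser coefP s) s := by
  refine (hasDerivAt_mul_ser bound_P s).congr_deriv (congrArg (ser · s) (funext fun n => ?_))
  simp only [coefP, Nat.factorial_succ]
  push_cast
  field_simp

lemma hasDerivAt_mul_serH (s : ℝ) :
    HasDerivAt (fun s => s * ser (dcoef coefH) s) (ser coefH s + ser (dcoef coefP) s) s := by
  refine (hasDerivAt_mul_ser bound_H s).congr_deriv ?_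
  have h1 := (summable_of_bound bound_H s).hasSum
  have h2 := (summable_of_bound (bound_dcoef bound_P) s).hasSum
  refine ((h1.add h2).congr_fun fun n => ?_).tsum_eq
  simp only [dcoef, coefP, coefH, Nat.factorial_succ, harmonic_succ]
  push_cast
  field_simp

/-- The function `-s y'(s)` for `y` the series `serK`. -/
noncomputable def auxK (s : ℝ) : ℝ :=
  ser coefP s + (2 * γ + Real.log s) * (s * ser (dcoef coefP) s) - 2 * (s * ser (dcoef coefH) s)

lemma hasDerivAt_serK {s : ℝ} (hs : 0 < s) : HasDerivAt serK (-(auxK s / s)) s := by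
  have hP := hasDerivAt_ser bound_P s
  have hH := hasDerivAt_ser bound_H s
  have hl := (Real.hasDerivAt_log hs.ne').const_add (2 * γ)
  refine ((hH.const_mul 2).sub (hl.mul hP)).congr_deriv ?_
  rw [auxK]
  field_simp
  ring

lemma hasDerivAt_auxK {s : ℝ} (hs : 0 < s) : HasDerivAt auxK (-serK s) s := by
  have hP := hasDerivAt_ser bound_P s
  have hl := (Real.hasDerivAt_log hs.ne').const_add (2 * γ)
  refine ((hP.add (hl.mul (hasDerivAt_mul_serP s))).sub
    ((hasDerivAt_mul_serH s).const_mul 2)).congr_deriv ?_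
  rw [serK]
  field_simp
  ring

lemma ser_zero (a : ℕ → ℝ) : ser a 0 = a 0 := by
  rw [ser, tsum_eq_single 0 (fun n hn => by simp [hn])]
  simp

lemma tendsto_ser {a : ℕ → ℝ} {C : ℝ} (ha : ∀ n, |a n| ≤ C / (n ! : ℝ)) :
    Tendsto (ser a) (𝓝[>] 0) (𝓝 (a 0)) := by
  rw [← ser_zero a]
  exact (hasDerivAt_ser ha 0).continuousAt.tendsto.mono_left nhdsWithin_le_nhds

lemma tendsto_log_mul_self : Tendsto (fun s : ℝ => Real.log s * s) (𝓝[>] 0) (𝓝 0) := by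
  simpa using tendsto_log_mul_rpow_nhdsGT_zero (r := 1) one_pos

lemma tendsto_log_sq_mul_self : Tendsto (fun s : ℝ => Real.log s ^ 2 * s) (𝓝[>] 0) (𝓝 0) := by
  have h := (tendsto_log_mul_rpow_nhdsGT_zero (r := 1 / 2) (by norm_num)).pow 2
  rw [zero_pow two_ne_zero] at h
  refine h.congr' ?_
  filter_upwards [self_mem_nhdsWithin] with s hs
  have hs' : (0 : ℝ) ≤ s := le_of_lt hs
  rw [mul_pow, ← Real.sqrt_eq_rpow, Real.sq_sqrt hs']

lemma tendsto_self : Tendsto (fun s : ℝ => s) (𝓝[>] 0) (𝓝 0) :=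
  tendsto_id.mono_left nhdsWithin_le_nhds

lemma tendsto_auxK : Tendsto auxK (𝓝[>] 0) (𝓝 1) := by
  have hP1 := tendsto_ser (bound_dcoef bound_P)
  have hH1 := tendsto_ser (bound_dcoef bound_H)
  have h := ((tendsto_ser bound_P).add
    (((tendsto_self.const_mul (2 * γ)).add tendsto_log_mul_self).mul hP1)).sub
    ((tendsto_self.mul hH1).const_mul 2)
  have h0 : coefP 0 + (2 * γ * 0 + 0) * dcoef coefP 0 - 2 * (0 * dcoef coefH 0) = 1 := by
    simp [coefP]
  rw [h0] at h
  refine h.congr fun s => ?_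
  rw [auxK]
  ring

/-- The behaviour of `serK` at `0`. Adding `log s` times `auxK`, rather than `log s`, matches the
identity `mom_one_eq` for the integrals. -/
lemma tendsto_serK_add : Tendsto (fun s => serK s + Real.log s * auxK s) (𝓝[>] 0)
    (𝓝 (-(2 * γ))) := by
  have hP1 := tendsto_ser (bound_dcoef bound_P)
  have hH1 := tendsto_ser (bound_dcoef bound_H)
  have h := ((((tendsto_ser bound_H).const_mul 2).sub ((tendsto_ser bound_P).const_mul (2 * γ))).add
    (((tendsto_log_mul_self.const_mul (2 * γ)).add tendsto_log_sq_mul_self).mul hP1)).sub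
    ((tendsto_log_mul_self.mul hH1).const_mul 2)
  have h0 : 2 * coefH 0 - 2 * γ * coefP 0 + (2 * γ * 0 + 0) * dcoef coefP 0
      - 2 * (0 * dcoef coefH 0) = -(2 * γ) := by
    simp [coefP, coefH]
  rw [h0] at h
  refine h.congr fun s => ?_
  rw [auxK, serK]
  ring

/-! ### The integrals -/

lemma integrableOn_exp_neg : IntegrableOn (fun t : ℝ => Real.exp (-t)) (Ioi 0) :=
  integrableOn_exp_neg_Ioi 0

lemma exp_neg_div_le {s t : ℝ} (hs : 0 < s) (ht : 0 < t) (k : ℕ) :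
    Real.exp (-(s / t)) / t ^ k ≤ (k ! : ℝ) / s ^ k := by
  have h := Real.pow_div_factorial_le_exp (s / t) (by positivity) k
  have hk : (0 : ℝ) < k ! := by positivity
  rw [Real.exp_neg, div_le_div_iff₀ (by positivity) (by positivity)]
  rw [div_pow, div_div, div_le_iff₀ (by positivity)] at h
  rw [inv_mul_le_iff₀ (Real.exp_pos _)]
  linarith

lemma kernel_le {c s t : ℝ} (hc : 0 < c) (hcs : c ≤ s) (ht : 0 < t) (k : ℕ) :
    Real.exp (-t - s / t) / t ^ k ≤ (k ! : ℝ) / c ^ k * Real.exp (-t) := by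
  have h1 : Real.exp (-t - s / t) ≤ Real.exp (-t) * Real.exp (-(c / t)) := by
    rw [← Real.exp_add]
    apply Real.exp_le_exp.mpr
    have : c / t ≤ s / t := by gcongr
    linarith
  calc Real.exp (-t - s / t) / t ^ k ≤ (Real.exp (-t) * Real.exp (-(c / t))) / t ^ k := by gcongr
    _ = Real.exp (-t) * (Real.exp (-(c / t)) / t ^ k) := by ring
    _ ≤ Real.exp (-t) * ((k ! : ℝ) / c ^ k) := 
      mul_le_mul_of_nonneg_left (exp_neg_div_le hc ht k) (Real.exp_nonneg _)
    _ = _ := by ring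

lemma measurable_kernel (s : ℝ) (k : ℕ) :
    Measurable fun t : ℝ => Real.exp (-t - s / t) / t ^ k :=
  (Real.measurable_exp.comp (measurable_neg.sub (measurable_const.div measurable_id))).div
    (measurable_id.pow_const k)

lemma integrableOn_kernel {s : ℝ} (hs : 0 < s) (k : ℕ) :
    IntegrableOn (fun t : ℝ => Real.exp (-t - s / t) / t ^ k) (Ioi 0) := by
  refine Integrable.mono' (integrableOn_exp_neg.const_mul ((k ! : ℝ) / s ^ k))
    (measurable_kernel s k).aestronglyMeasurable ?_
  filter_upwards [ae_restrict_mem measurableSet_Ioi] with t ht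
  have ht' : (0 : ℝ) < t := ht
  rw [Real.norm_of_nonneg (by positivity)]
  exact kernel_le hs le_rfl ht' k

/-- The integrals `∫₀^∞ exp(-t - s/t) t^{-k} dt`. For `k = 1` and `s = x² / 4` this is `2 K₀(x)`. -/
noncomputable def mom (k : ℕ) (s : ℝ) : ℝ := ∫ t in Ioi (0 : ℝ), Real.exp (-t - s / t) / t ^ k

lemma hasDerivAt_mom {s : ℝ} (hs : 0 < s) (k : ℕ) :
    HasDerivAt (mom k) (-mom (k + 1) s) s := by
  have h := hasDerivAt_integral_of_dominated_loc_of_deriv_le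
    (μ := volume.restrict (Ioi (0 : ℝ))) (x₀ := s) (s := Ioi (s / 2))
    (F := fun s t => Real.exp (-t - s / t) / t ^ k)
    (F' := fun s t => -(Real.exp (-t - s / t) / t ^ (k + 1)))
    (bound := fun t => ((k + 1)! : ℝ) / (s / 2) ^ (k + 1) * Real.exp (-t))
    (Ioi_mem_nhds (by linarith))
    (Eventually.of_forall fun s => (measurable_kernel s k).aestronglyMeasurable)
    (integrableOn_kernel hs k)
    (measurable_kernel s (k + 1)).neg.aestronglyMeasurable
    (by
      filter_upwards [ae_restrict_mem measurableSet_Ioi] with t ht y hy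
      have ht' : (0 : ℝ) < t := ht
      rw [norm_neg, Real.norm_of_nonneg (by positivity)]
      exact kernel_le (by linarith) (le_of_lt hy) ht' (k + 1))
    (integrableOn_exp_neg.const_mul _)
    (by
      filter_upwards [ae_restrict_mem measurableSet_Ioi] with t ht y _
      have ht' : (0 : ℝ) < t := ht
      have h1 := ((((hasDerivAt_id y).div_const t).const_sub (-t)).exp).div_const (t ^ k)
      refine h1.congr_deriv ?_
      simp only [id]
      field_simp
      ring)
  refine h.2.congr_deriv ?_
  rw [integral_neg]
  rfl

/-- The change of variables `t ↦ s / t` on `(0, ∞)`. -/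
lemma integral_comp_div (g : ℝ → ℝ) {s : ℝ} (hs : 0 < s) :
    ∫ t in Ioi (0 : ℝ), s / t ^ 2 * g (s / t) = ∫ u in Ioi (0 : ℝ), g u := by
  have h1 := integral_comp_rpow_Ioi (fun y => g (s * y)) (p := -1) (by norm_num)
  have h2 := integral_comp_mul_left_Ioi' g 0 hs
  rw [mul_zero, ← h1, smul_eq_mul, ← integral_const_mul] at h2
  rw [← h2]
  refine setIntegral_congr_fun measurableSet_Ioi fun t ht => ?_
  have ht' : (0 : ℝ) < t := ht
  simp only [smul_eq_mul, Real.rpow_neg_one, abs_neg, abs_one, one_mul]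
  rw [show (-1 : ℝ) - 1 = -((2 : ℕ) : ℝ) by norm_num, Real.rpow_neg ht'.le, Real.rpow_natCast]
  simp only [div_eq_mul_inv]
  ring

lemma integrableOn_comp_div {g : ℝ → ℝ} (hg : IntegrableOn g (Ioi 0)) {s : ℝ} (hs : 0 < s) :
    IntegrableOn (fun t => s / t ^ 2 * g (s / t)) (Ioi 0) := by
  have h2 : IntegrableOn (fun y => g (s * y)) (Ioi 0) := by
    rw [integrableOn_Ioi_comp_mul_left_iff g 0 hs, mul_zero]
    exact hg
  have h1 := (integrableOn_Ioi_comp_rpow_iff (fun y => g (s * y)) (p := -1) (by norm_num)).mpr h2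
  refine IntegrableOn.congr_fun (h1.const_mul s) (fun t ht => ?_) measurableSet_Ioi
  have ht' : (0 : ℝ) < t := ht
  simp only [smul_eq_mul, Real.rpow_neg_one, abs_neg, abs_one, one_mul]
  rw [show (-1 : ℝ) - 1 = -((2 : ℕ) : ℝ) by norm_num, Real.rpow_neg ht'.le, Real.rpow_natCast]
  simp only [div_eq_mul_inv]
  ring

lemma kernel_div {s t : ℝ} (hs : 0 < s) (ht : 0 < t) :
    Real.exp (-(s / t) - s / (s / t)) = Real.exp (-t - s / t) := by
  congr 1
  field_simp
  ring

/-- The substitution `t ↦ s / t`; with `hasDerivAt_mom` it gives `s f' = -A` for `f = mom 1` and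
`A = mom 0`. -/
lemma mom_zero_eq {s : ℝ} (hs : 0 < s) : mom 0 s = s * mom 2 s := by
  rw [mom, mom, ← integral_const_mul, ← integral_comp_div _ hs]
  refine setIntegral_congr_fun measurableSet_Ioi fun t ht => ?_
  simp only [pow_zero, div_one]
  rw [kernel_div hs ht]
  ring

/-- The value `Γ'(1) = -γ` as an integral. -/
lemma integral_log_mul_exp : ∫ t in Ioi (0 : ℝ), Real.log t * Real.exp (-t) = -γ := by
  have h1 := Complex.hasDerivAt_GammaIntegral (s := 1) (by simp)
  have h2 : HasDerivAt Complex.GammaIntegral (-γ : ℂ) 1 := by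
    refine Complex.hasDerivAt_Gamma_one.congr_of_eventuallyEq ?_
    have : ∀ᶠ z : ℂ in 𝓝 1, 0 < z.re :=
      Complex.continuous_re.continuousAt.eventually (lt_mem_nhds (by simp))
    filter_upwards [this] with z hz
    exact (Complex.Gamma_eq_integral hz).symm
  have h3 := h1.unique h2
  have h4 : ∫ t in Ioi (0 : ℝ), (t : ℂ) ^ ((1 : ℂ) - 1) * (Real.log t * Real.exp (-t) : ℂ)
      = ((∫ t in Ioi (0 : ℝ), Real.log t * Real.exp (-t) : ℝ) : ℂ) := by
    rw [← integral_complex_ofReal]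
    refine integral_congr_ae (Eventually.of_forall fun t => ?_)
    simp
  have h5 := h4.symm.trans (by simpa using h3)
  exact_mod_cast h5

lemma integrableOn_log_mul_exp :
    IntegrableOn (fun t : ℝ => Real.log t * Real.exp (-t)) (Ioi 0) := by
  -- a non-integrable function would have Bochner integral `0`, whereas `γ > 1/2`
  by_contra h
  have h1 := integral_undef h
  rw [integral_log_mul_exp] at h1
  linarith [Real.one_half_lt_eulerMascheroniConstant]

/-- The logarithmic integral `∫₀^∞ log t · exp(-t - s/t) dt`. -/
noncomputable def momLog (s : ℝ) : ℝ := ∫ t in Ioi (0 : ℝ), Real.log t * Real.exp (-t - s / t)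

lemma kernel_le_exp {s t : ℝ} (hs : 0 < s) (ht : 0 < t) :
    Real.exp (-t - s / t) ≤ Real.exp (-t) := by
  apply Real.exp_le_exp.mpr
  have : 0 < s / t := by positivity
  linarith

lemma norm_log_kernel_le {s t : ℝ} (hs : 0 < s) (ht : 0 < t) :
    ‖Real.log t * Real.exp (-t - s / t)‖ ≤ ‖Real.log t * Real.exp (-t)‖ := by
  rw [norm_mul, norm_mul, Real.norm_of_nonneg (Real.exp_nonneg _),
    Real.norm_of_nonneg (Real.exp_nonneg _)]
  exact mul_le_mul_of_nonneg_left (kernel_le_exp hs ht) (norm_nonneg _)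

lemma integrableOn_log_kernel {s : ℝ} (hs : 0 < s) :
    IntegrableOn (fun t : ℝ => Real.log t * Real.exp (-t - s / t)) (Ioi 0) := by
  refine Integrable.mono integrableOn_log_mul_exp
    ((Real.measurable_log.mul (by fun_prop)).aestronglyMeasurable) ?_
  filter_upwards [ae_restrict_mem measurableSet_Ioi] with t ht
  exact norm_log_kernel_le hs ht

/-- Integration by parts against `log t`, with the substitution `t ↦ s / t` in one term. -/
lemma mom_one_eq {s : ℝ} (hs : 0 < s) : mom 1 s = 2 * momLog s - Real.log s * mom 0 s := by
  have hA := integrableOn_kernel hs 0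
  have hf := integrableOn_kernel hs 1
  have hL := integrableOn_log_kernel hs
  simp only [pow_zero, div_one, pow_one] at hA hf
  let g : ℝ → ℝ := fun u => Real.log s * Real.exp (-u - s / u) - Real.log u * Real.exp (-u - s / u)
  have hg : IntegrableOn g (Ioi 0) := (hA.const_mul _).sub hL
  have hgd := integrableOn_comp_div hg hs
  have hgi : ∫ u in Ioi (0 : ℝ), g u = Real.log s * mom 0 s - momLog s := by
    simp only [g]
    rw [integral_sub (hA.const_mul _) hL, integral_const_mul, mom, momLog]
    simp
  let D : ℝ → ℝ := fun t => Real.exp (-t - s / t) / t - Real.log t * Real.exp (-t - s / t)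
    + s / t ^ 2 * g (s / t)
  have hD : IntegrableOn D (Ioi 0) := (hf.sub hL).add hgd
  have hDi : ∫ t in Ioi (0 : ℝ), D t = mom 1 s - momLog s + (Real.log s * mom 0 s - momLog s) := by
    have e1 : ∫ t in Ioi (0 : ℝ), D t = (∫ t in Ioi (0 : ℝ), (Real.exp (-t - s / t) / t
        - Real.log t * Real.exp (-t - s / t))) + ∫ t in Ioi (0 : ℝ), s / t ^ 2 * g (s / t) :=
      integral_add (hf.sub hL) hgd
    rw [e1, integral_comp_div g hs, hgi, integral_sub hf hL]
    simp [mom, momLog]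
  have hzero : ∫ t in Ioi (0 : ℝ), D t = 0 := by
    have := integral_Ioi_of_hasDerivAt_of_tendsto
      (f := fun t => Real.log t * Real.exp (-t - s / t)) (f' := D) (a := 0) (m := 0) ?_ ?_ hD ?_
    · simpa using this
    · -- at `0` the junk value `log 0 = 0` agrees with the limit
      rw [← continuousWithinAt_Ioi_iff_Ici]
      have h0 := (tendsto_log_mul_self.norm).div_const s
      rw [norm_zero, zero_div] at h0
      have : Tendsto (fun t => Real.log t * Real.exp (-t - s / t)) (𝓝[>] 0) (𝓝 0) := by
        refine squeeze_zero_norm' ?_ h0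
        filter_upwards [self_mem_nhdsWithin] with t ht
        have ht' : (0 : ℝ) < t := ht
        have h1 := exp_neg_div_le hs ht' 1
        have h2 : Real.exp (-t - s / t) ≤ Real.exp (-(s / t)) :=
          Real.exp_le_exp.mpr (by linarith)
        simp only [pow_one, Nat.factorial_one, Nat.cast_one] at h1
        rw [div_le_iff₀ ht'] at h1
        rw [norm_mul, norm_mul, Real.norm_of_nonneg (Real.exp_nonneg _),
          Real.norm_of_nonneg ht'.le, mul_div_assoc]
        gcongr
        calc _ ≤ _ := h2
          _ ≤ _ := h1
          _ = _ := by ring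
      simpa [ContinuousWithinAt] using this
    · intro t ht
      have ht' : (0 : ℝ) < t := ht
      have h1 : HasDerivAt (fun t : ℝ => -t - s / t) (-1 + s / t ^ 2) t := by
        refine ((hasDerivAt_neg t).sub ((hasDerivAt_inv ht'.ne').const_mul s)).congr_deriv ?_
        field_simp
        ring
      refine ((Real.hasDerivAt_log ht'.ne').mul h1.exp).congr_deriv ?_
      simp only [D, g]
      rw [kernel_div hs ht', Real.log_div hs.ne' ht'.ne']
      ring
    · have h0 := Real.tendsto_pow_mul_exp_neg_atTop_nhds_zero 1
      refine squeeze_zero_norm' ?_ h0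
      filter_upwards [eventually_ge_atTop 1] with t ht
      have ht' : (0 : ℝ) < t := by linarith
      rw [norm_mul, Real.norm_of_nonneg (Real.exp_nonneg _),
        Real.norm_of_nonneg (Real.log_nonneg ht), pow_one]
      exact mul_le_mul (by linarith [Real.log_le_sub_one_of_pos ht']) (kernel_le_exp hs ht')
        (Real.exp_nonneg _) ht'.le
  linarith

lemma tendsto_kernel {t : ℝ} :
    Tendsto (fun s : ℝ => Real.exp (-t - s / t)) (𝓝[>] 0) (𝓝 (Real.exp (-t))) := by
  have : Continuous fun s : ℝ => Real.exp (-t - s / t) := by fun_prop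
  have h := (this.tendsto 0).mono_left (nhdsWithin_le_nhds (s := Ioi (0 : ℝ)))
  simpa using h

lemma tendsto_mom_zero : Tendsto (mom 0) (𝓝[>] 0) (𝓝 1) := by
  have h := tendsto_integral_filter_of_dominated_convergence
    (μ := volume.restrict (Ioi (0 : ℝ))) (l := 𝓝[>] (0 : ℝ))
    (F := fun s t => Real.exp (-t - s / t) / t ^ 0) (f := fun t => Real.exp (-t))
    (fun t => Real.exp (-t))
    (Eventually.of_forall fun s => (measurable_kernel s 0).aestronglyMeasurable)
    (by
      filter_upwards [self_mem_nhdsWithin] with s hs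
      filter_upwards [ae_restrict_mem measurableSet_Ioi] with t ht
      rw [pow_zero, div_one, Real.norm_of_nonneg (Real.exp_nonneg _)]
      exact kernel_le_exp hs ht)
    integrableOn_exp_neg
    (Eventually.of_forall fun t => by simpa using tendsto_kernel)
  rw [integral_exp_neg_Ioi_zero] at h
  exact h

lemma tendsto_momLog : Tendsto momLog (𝓝[>] 0) (𝓝 (-γ)) := by
  have h := tendsto_integral_filter_of_dominated_convergence
    (μ := volume.restrict (Ioi (0 : ℝ))) (l := 𝓝[>] (0 : ℝ))
    (F := fun s t => Real.log t * Real.exp (-t - s / t)) (f := fun t => Real.log t * Real.exp (-t))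
    (fun t => ‖Real.log t * Real.exp (-t)‖)
    (Eventually.of_forall fun s => (Real.measurable_log.mul (by fun_prop)).aestronglyMeasurable)
    (by
      filter_upwards [self_mem_nhdsWithin] with s hs
      filter_upwards [ae_restrict_mem measurableSet_Ioi] with t ht
      exact norm_log_kernel_le hs ht)
    integrableOn_log_mul_exp.norm
    (Eventually.of_forall fun t => tendsto_kernel.const_mul _)
  rw [integral_log_mul_exp] at h
  exact h

/-! ### Identification of the series with the integral -/

lemma eq_zero_of_hasDerivAt_zero {F : ℝ → ℝ} (hF : ∀ s, 0 < s → HasDerivAt F 0 s)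
    (h0 : Tendsto F (𝓝[>] 0) (𝓝 0)) {s : ℝ} (hs : 0 < s) : F s = 0 := by
  have hconst : ∀ t ∈ Ioi (0 : ℝ), F t = F s := fun t ht =>
    isOpen_Ioi.is_const_of_deriv_eq_zero isPreconnected_Ioi
      (fun u hu => (hF u hu).differentiableAt.differentiableWithinAt)
      (fun u hu => (hF u hu).deriv) ht hs
  have h1 : Tendsto F (𝓝[>] 0) (𝓝 (F s)) :=
    tendsto_const_nhds.congr' (by
      filter_upwards [self_mem_nhdsWithin] with t ht using (hconst t ht).symm)
  exact tendsto_nhds_unique h1 h0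

lemma serP_pos {s : ℝ} (hs : 0 < s) : 0 < ser coefP s := by
  refine (summable_of_bound bound_P s).tsum_pos (fun n => ?_) 0 ?_
  · rw [coefP]; positivity
  · simp [coefP]

/-- The integral representation: the series for `2 K₀` equals `∫₀^∞ exp(-t - s/t) dt/t`. -/
theorem mom_one_eq_serK {s : ℝ} (hs : 0 < s) : mom 1 s = serK s := by
  let e : ℝ → ℝ := fun s => mom 1 s - serK s
  let b : ℝ → ℝ := fun s => mom 0 s - auxK s
  let P : ℝ → ℝ := ser coefP
  let S : ℝ → ℝ := fun s => s * ser (dcoef coefP) s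
  have he : ∀ s, 0 < s → HasDerivAt e (-(b s / s)) s := fun s hs => by
    refine ((hasDerivAt_mom hs 1).sub (hasDerivAt_serK hs)).congr_deriv ?_
    simp only [b]
    rw [mom_zero_eq hs]
    field_simp
    ring
  have hb : ∀ s, 0 < s → HasDerivAt b (-e s) s := fun s hs => by
    refine ((hasDerivAt_mom hs 0).sub (hasDerivAt_auxK hs)).congr_deriv ?_
    simp only [e]
    ring
  have hP : ∀ s, 0 < s → HasDerivAt P (S s / s) s := fun s hs => by
    refine (hasDerivAt_ser bound_P s).congr_deriv ?_
    simp only [S]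
    field_simp
  have hS : ∀ s, HasDerivAt S (P s) s := hasDerivAt_mul_serP
  have hPlim : Tendsto P (𝓝[>] 0) (𝓝 1) := by
    have := tendsto_ser bound_P
    rwa [show coefP 0 = 1 by simp [coefP]] at this
  have hP1lim := tendsto_ser (bound_dcoef bound_P)
  have hSlim : Tendsto S (𝓝[>] 0) (𝓝 0) := by
    have := tendsto_self.mul hP1lim
    rwa [zero_mul] at this
  have hlSlim : Tendsto (fun s => P s - Real.log s * S s) (𝓝[>] 0) (𝓝 1) := by
    have := hPlim.sub (tendsto_log_mul_self.mul hP1lim)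
    rw [zero_mul, sub_zero] at this
    refine this.congr fun s => ?_
    simp only [S]
    ring
  have hblim : Tendsto b (𝓝[>] 0) (𝓝 0) := by
    have := tendsto_mom_zero.sub tendsto_auxK
    rwa [sub_self] at this
  have heblim : Tendsto (fun s => e s + Real.log s * b s) (𝓝[>] 0) (𝓝 0) := by
    have := (tendsto_momLog.const_mul 2).sub tendsto_serK_add
    rw [show 2 * -γ - -(2 * γ) = 0 by ring] at this
    refine this.congr' ?_
    filter_upwards [self_mem_nhdsWithin] with s hs
    simp only [e, b]
    rw [mom_one_eq hs]
    ring
  -- the Wronskian of `e` and `P` vanishes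
  have hW : ∀ s, 0 < s → e s * S s + b s * P s = 0 := fun s hs => by
    refine eq_zero_of_hasDerivAt_zero (F := fun s => e s * S s + b s * P s) (fun s hs => ?_) ?_ hs
    · refine (((he s hs).mul (hS s)).add ((hb s hs).mul (hP s hs))).congr_deriv ?_
      field_simp
      ring
    · have := (heblim.mul hSlim).add (hblim.mul hlSlim)
      rw [mul_zero, zero_mul, add_zero] at this
      refine this.congr fun s => ?_
      ring
  -- hence `e / P` is constant, and it tends to `0`
  have hQ : e s / P s = 0 := by
    refine eq_zero_of_hasDerivAt_zero (F := fun s => e s / P s) (fun s hs => ?_) ?_ hs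
    · have hp : P s ≠ 0 := (serP_pos hs).ne'
      refine ((he s hs).div (hP s hs) hp).congr_deriv ?_
      have hw := hW s hs
      field_simp
      linear_combination -hw
    · have := heblim.div hlSlim one_ne_zero
      rw [zero_div] at this
      refine this.congr' ?_
      filter_upwards [self_mem_nhdsWithin, hlSlim.eventually_ne one_ne_zero] with s hs hne
      have hp : P s ≠ 0 := (serP_pos hs).ne'
      have hw := hW s hs
      simp only [Pi.div_apply]
      rw [div_eq_div_iff hne hp]
      linear_combination Real.log s * hw
  have := (div_eq_zero_iff.mp hQ).resolve_right (serP_pos hs).ne'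
  exact sub_eq_zero.mp this

/-! ### The bound -/

/-- On `(0, s]` the kernel is at most `(s/t²) e^{-s/t}`, on `[1, ∞)` at most `e^{-t}`, and in
between at most `1/t`. -/
lemma mom_one_le {s : ℝ} (hs : 0 < s) : mom 1 s ≤ 2 + |Real.log s| := by
  have hE := integrableOn_exp_neg
  have hE1 : ∫ t in Ioi (0 : ℝ), Real.exp (-t) = 1 := integral_exp_neg_Ioi_zero
  have hG := integrableOn_comp_div hE hs
  have hG1 := (integral_comp_div (fun u => Real.exp (-u)) hs).trans hE1
  let r : ℝ → ℝ := (Ioc s 1).indicator fun t => 1 / t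
  have hri : IntegrableOn (fun t : ℝ => 1 / t) (Ioc s 1) := by
    refine (ContinuousOn.integrableOn_Icc ?_).mono_set Ioc_subset_Icc_self
    exact continuousOn_const.div continuousOn_id fun t ht => (hs.trans_le ht.1).ne'
  have hr : IntegrableOn r (Ioi 0) :=
    ((integrable_indicator_iff measurableSet_Ioc).mpr hri).integrableOn
  have hr1 : ∫ t in Ioi (0 : ℝ), r t ≤ |Real.log s| := by
    have hsub : Ioc s 1 ⊆ Ioi (0 : ℝ) := fun t ht => hs.trans ht.1
    rw [setIntegral_indicator measurableSet_Ioc, inter_eq_self_of_subset_right hsub]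
    rcases le_or_gt s 1 with h | h
    · rw [← intervalIntegral.integral_of_le h, integral_one_div_of_pos hs one_pos, one_div,
        Real.log_inv]
      exact neg_le_abs _
    · simp [Ioc_eq_empty (not_lt.mpr h.le)]
  have hle : mom 1 s ≤ ∫ t in Ioi (0 : ℝ),
      (Real.exp (-t) + s / t ^ 2 * Real.exp (-(s / t)) + r t) := by
    refine setIntegral_mono_on (integrableOn_kernel hs 1) ((hE.add hG).add hr)
      measurableSet_Ioi fun t ht => ?_
    have ht' : (0 : ℝ) < t := ht
    have h1 : 0 < Real.exp (-t) := Real.exp_pos _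
    have h2 : 0 < s / t ^ 2 * Real.exp (-(s / t)) := by positivity
    have h3 : 0 ≤ r t := indicator_nonneg (fun t ht => by
      have : 0 < t := hs.trans ht.1
      positivity) t
    have h4 := kernel_le_exp hs ht'
    rw [pow_one]
    rcases le_or_gt t s with hts | hts
    · have h5 : Real.exp (-t - s / t) ≤ Real.exp (-(s / t)) :=
        Real.exp_le_exp.mpr (by linarith)
      have h6 : Real.exp (-t - s / t) / t ≤ s / t ^ 2 * Real.exp (-(s / t)) := by
        calc Real.exp (-t - s / t) / t ≤ Real.exp (-(s / t)) / t := by gcongr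
          _ = 1 * (Real.exp (-(s / t)) / t) := by ring
          _ ≤ s / t * (Real.exp (-(s / t)) / t) := by
            gcongr
            exact (one_le_div ht').mpr hts
          _ = _ := by ring
      linarith
    · rcases le_or_gt t 1 with ht1 | ht1
      · have h5 : r t = 1 / t := indicator_of_mem (show t ∈ Ioc s 1 from ⟨hts, ht1⟩) _
        have h6 : Real.exp (-t - s / t) / t ≤ 1 / t := by
          gcongr
          exact h4.trans (Real.exp_le_one_iff.mpr (by linarith))
        linarith
      · have h6 : Real.exp (-t - s / t) / t ≤ Real.exp (-t - s / t) :=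
          div_le_self (Real.exp_nonneg _) ht1.le
        linarith
  have e1 : ∫ t in Ioi (0 : ℝ), (Real.exp (-t) + s / t ^ 2 * Real.exp (-(s / t)) + r t)
      = (∫ t in Ioi (0 : ℝ), (Real.exp (-t) + s / t ^ 2 * Real.exp (-(s / t))))
        + ∫ t in Ioi (0 : ℝ), r t := integral_add (hE.add hG) hr
  rw [e1, integral_add hE hG, hE1, hG1] at hle
  linarith

end BesselKZero

/-- For all real `x > 0`, `K₀(x)` is real with `K₀(x) ≤ 1 + log 2 + |log x|`. -/
theorem besselK_zero_log_bound (x : ℝ) (hx : 0 < x) :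
    (besselK 0 (x : ℂ)).im = 0 ∧
    (besselK 0 (x : ℂ)).re ≤ 1 + Real.log 2 + |Real.log x| := by
  have hs : 0 < (x / 2) ^ 2 := by positivity
  rw [BesselKZero.besselK_zero_eq x hx, ← BesselKZero.mom_one_eq_serK hs]
  refine ⟨Complex.ofReal_im _, ?_⟩
  rw [Complex.ofReal_re]
  have h := BesselKZero.mom_one_le hs
  have h2 : |Real.log ((x / 2) ^ 2)| ≤ 2 * (|Real.log x| + Real.log 2) := by
    rw [Real.log_pow, Real.log_div hx.ne' two_ne_zero, abs_mul]
    have h3 := abs_sub (Real.log x) (Real.log 2)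
    rw [abs_of_pos (Real.log_pos one_lt_two)] at h3
    norm_num
    exact h3
  linarith
end

section
/- For s ∈ (0,3), the function f_s(x,t) = (x⁴ + t²)^{−s/4} on ℝ² is locally integrable and bounded outside the unit ball, and the map φ ↦ ∫_{ℝ²} φ f_s defines a tempered distribution on ℝ². Moreover, if s ∈ (1,3), then there exist a locally integrable function g : ℝ² → ℝ and a constant C_s > 0 depending only on s such that: (i) for every Schwartz function φ on ℝ², ∫_{ℝ²} φ̂(x,t) f_s(x,t) dx dt = ∫_{ℝ²} φ(ξ) g(ξ) dξ (i.e. g represents the distributional Fourier transform of f_s), and (ii) 0 < g(ξ₁, ξ₂) ≤ C_s f_{3−s}(ξ₁, ξ₂) for all (ξ₁, ξ₂) with ξ₂ ≠ 0. -/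
/-!
Let `α = s/4` and `0 < s < 3`. Euler's integrals for `(b + it)^{-α}` and `(b - it)^{-α}`, multiplied
and rewritten in the coordinates `(τ, v)` of the cone `|τ| < v`, give for `b > 0`

  `c (b² + t²)^{-α} = ∫_{|τ| < v} (v² - τ²)^{α-1} e^{-2πvb} e^{2πitτ} dτ dv`,
  `c = π^{-2α} Γ(α)² / 2`

(`integral_cone`). For `b = x²` the left side is `c f_s(x,t)`, and on the right `e^{-2πvx²}` is the
Fourier transform of the Gaussian `(2v)^{-1/2} e^{-πξ²/(2v)}`. Hence `c f̂_s` should be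

  `coneFourier α (ξ,τ) = ∫_{v > |τ|} (v² - τ²)^{α-1} (2v)^{-1/2} e^{-πξ²/(2v)} dv`,

which is positive for `τ ≠ 0`. The substitution `v = |τ|u` gives
`coneFourier α (ξ,τ) = |τ|^{-(3-s)/2} H(ξ²/|τ|)` with `H` bounded and `H(w) = O(w^{-(3-s)/2})`; this
is the bound by a multiple of `f_{3-s}` (`coneFourier_le`), which also yields local integrability.

The identity `∫ φ̂ f_s = ∫ φ g` is proved with `b = x² + ε`, where the cone integral converges
absolutely, uniformly in `x`, so that Fubini applies (`regularized_parseval`); dominated convergence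
as `ε → 0` removes the regularization (`koranyi_parseval`).

The integrability of the kernel against Schwartz functions rests on
`x⁴ + t² ≥ |x|^{4/3} |t|^{4/3}`, whence `f_s(x,t) ≤ |x|^{-s/3} |t|^{-s/3}` with `s/3 < 1`.
-/

open Filter Set MeasureTheory
open scoped Real SchwartzMap

/-- The Korányi kernel `f_s(x,t) = (x⁴ + t²)^{-s/4}` on `ℝ²`. -/
noncomputable def koranyiKernel (s : ℝ) (p : ℝ × ℝ) : ℝ :=
  (p.1 ^ 4 + p.2 ^ 2) ^ (-(s / 4))

/-- The Euclidean Fourier transform on `ℝ²`: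
`φ̂(ξ) = ∫ e^{-2πi⟨p,ξ⟩} φ(p) dp`. -/
noncomputable def fourier2 (φ : (ℝ × ℝ) → ℂ) (ξ : ℝ × ℝ) : ℂ :=
  ∫ p : ℝ × ℝ,
    Complex.exp (-2 * (Real.pi : ℂ) * Complex.I * ((p.1 : ℂ) * (ξ.1 : ℂ) + (p.2 : ℂ) * (ξ.2 : ℂ)))
      * φ p

/-! ### The kernel as a tempered distribution -/

theorem integrable_abs_rpow_weight {r : ℝ} (hr0 : 0 ≤ r) (hr1 : r < 1) :
    Integrable (fun x : ℝ => (1 + x ^ 2)⁻¹ * |x| ^ (-r)) := by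
  have h1 : IntegrableOn (fun x : ℝ => |x| ^ (-r)) (Ioo 0 1) :=
    ((intervalIntegral.integrableOn_Ioo_rpow_iff one_pos).2 (by linarith : -1 < -r)).congr_fun
      (fun x hx => by simp only [abs_of_pos hx.1]) measurableSet_Ioo
  have h2 : IntegrableOn (fun x : ℝ => |x| ^ (-r)) (Ioo (-1) 0) := by
    simpa using h1.comp_neg
  have h3 : Integrable (indicator (Ioo 0 1 ∪ Ioo (-1) 0) (fun x : ℝ => |x| ^ (-r))) :=
    (integrable_indicator_iff (by measurability)).2 (h1.union h2)
  refine (h3.add integrable_inv_one_add_sq).mono' (by fun_prop) ?_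
  filter_upwards [compl_mem_ae_iff.2 (measure_singleton (0 : ℝ))] with x hx
  have hx0 : x ≠ 0 := by simpa using hx
  have hw : (1 + x ^ 2)⁻¹ ≤ 1 := inv_le_one_of_one_le₀ (by nlinarith)
  have hpos : 0 < |x| := abs_pos.2 hx0
  rw [Real.norm_of_nonneg (by positivity)]
  simp only [Pi.add_apply]
  by_cases h : |x| < 1
  · have hm : x ∈ Ioo (0 : ℝ) 1 ∪ Ioo (-1) 0 := by
      rcases lt_or_gt_of_ne hx0 with h' | h'
      · exact Or.inr ⟨(abs_lt.1 h).1, h'⟩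
      · exact Or.inl ⟨h', (abs_lt.1 h).2⟩
    rw [indicator_of_mem hm]
    have : 0 ≤ |x| ^ (-r) := by positivity
    have h4 : 0 ≤ (1 + x ^ 2)⁻¹ := by positivity
    nlinarith
  · have h5 : |x| ^ (-r) ≤ 1 := Real.rpow_le_one_of_one_le_of_nonpos (not_lt.1 h) (by linarith)
    have h4 : 0 ≤ (1 + x ^ 2)⁻¹ := by positivity
    have h6 : 0 ≤ indicator (Ioo 0 1 ∪ Ioo (-1) 0) (fun x : ℝ => |x| ^ (-r)) x :=
      indicator_nonneg (fun _ _ => by positivity) _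
    nlinarith

theorem koranyiKernel_nonneg (s : ℝ) (p : ℝ × ℝ) : 0 ≤ koranyiKernel s p := by
  unfold koranyiKernel; positivity

@[fun_prop]
theorem measurable_koranyiKernel (s : ℝ) : Measurable (koranyiKernel s) := by
  unfold koranyiKernel; fun_prop

/-- Off the axes, `x⁴ + t² ≥ (x⁴)^{1/3} (t²)^{2/3}` separates the variables in the kernel. -/
theorem koranyiKernel_le_mul {s : ℝ} (hs : 0 < s) {x t : ℝ} (hx : x ≠ 0) (ht : t ≠ 0) :
    koranyiKernel s (x, t) ≤ |x| ^ (-(s / 3)) * |t| ^ (-(s / 3)) := by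
  have hx' : 0 < |x| := abs_pos.2 hx
  have ht' : 0 < |t| := abs_pos.2 ht
  have hx4 : x ^ 4 = |x| ^ (4 : ℝ) := by
    rw [← Even.pow_abs (by decide : Even 4)]; norm_cast
  have ht2 : t ^ 2 = |t| ^ (2 : ℝ) := by
    rw [← sq_abs]; norm_cast
  have key : |x| ^ (4 / 3 : ℝ) * |t| ^ (4 / 3 : ℝ) ≤ x ^ 4 + t ^ 2 := by
    have h := Real.geom_mean_le_arith_mean2_weighted (by norm_num : (0 : ℝ) ≤ 1 / 3)
      (by norm_num : (0 : ℝ) ≤ 2 / 3) (by positivity : 0 ≤ x ^ 4) (by positivity : 0 ≤ t ^ 2)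
      (by norm_num)
    have e1 : (x ^ 4) ^ (1 / 3 : ℝ) = |x| ^ (4 / 3 : ℝ) := by
      rw [hx4, ← Real.rpow_mul hx'.le]; norm_num
    have e2 : (t ^ 2) ^ (2 / 3 : ℝ) = |t| ^ (4 / 3 : ℝ) := by
      rw [ht2, ← Real.rpow_mul ht'.le]; norm_num
    rw [e1, e2] at h
    nlinarith [sq_nonneg t, sq_nonneg (x ^ 2)]
  have h := Real.rpow_le_rpow_of_nonpos (by positivity) key (by linarith : -(s / 4) ≤ 0)
  rw [Real.mul_rpow (by positivity) (by positivity), ← Real.rpow_mul hx'.le,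
    ← Real.rpow_mul ht'.le] at h
  have e : (4 / 3 : ℝ) * -(s / 4) = -(s / 3) := by ring
  rw [e] at h
  exact h

theorem ae_ne_zero_fst : ∀ᵐ p : ℝ × ℝ, p.1 ≠ 0 :=
  Measure.quasiMeasurePreserving_fst.ae (p := fun x : ℝ => x ≠ 0)
    (compl_mem_ae_iff.2 (measure_singleton (0 : ℝ)))

theorem ae_ne_zero_snd : ∀ᵐ p : ℝ × ℝ, p.2 ≠ 0 :=
  Measure.quasiMeasurePreserving_snd.ae (p := fun x : ℝ => x ≠ 0)
    (compl_mem_ae_iff.2 (measure_singleton (0 : ℝ)))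

theorem integrable_weight_mul_koranyiKernel {s : ℝ} (hs : s ∈ Ioo (0 : ℝ) 3) :
    Integrable (fun p : ℝ × ℝ => ((1 + p.1 ^ 2)⁻¹ * (1 + p.2 ^ 2)⁻¹) * koranyiKernel s p) := by
  have h := integrable_abs_rpow_weight (r := s / 3) (by linarith [hs.1]) (by linarith [hs.2])
  refine (h.mul_prod h).mono' (by fun_prop) ?_
  filter_upwards [ae_ne_zero_fst, ae_ne_zero_snd] with p h1 h2
  have hk := koranyiKernel_le_mul hs.1 h1 h2
  have h0 := koranyiKernel_nonneg s p
  rw [Real.norm_of_nonneg (by positivity)]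
  calc _ ≤ ((1 + p.1 ^ 2)⁻¹ * (1 + p.2 ^ 2)⁻¹) * (|p.1| ^ (-(s / 3)) * |p.2| ^ (-(s / 3))) := by
        gcongr
    _ = _ := by ring

theorem locallyIntegrable_koranyiKernel {s : ℝ} (hs : s ∈ Ioo (0 : ℝ) 3) :
    LocallyIntegrable (koranyiKernel s) := by
  have h := (integrable_weight_mul_koranyiKernel hs).locallyIntegrable.continuous_mul
    (g := fun p : ℝ × ℝ => (1 + p.1 ^ 2) * (1 + p.2 ^ 2)) (by fun_prop)
  refine h.congr (Eventually.of_forall fun p => ?_)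
  have h1 : (1 + p.1 ^ 2) ≠ 0 := by positivity
  have h2 : (1 + p.2 ^ 2) ≠ 0 := by positivity
  field_simp

theorem koranyiKernel_le_one {s : ℝ} (hs : 0 < s) (p : ℝ × ℝ) (hp : 1 ≤ ‖p‖) :
    |koranyiKernel s p| ≤ 1 := by
  rw [abs_of_nonneg (koranyiKernel_nonneg s p)]
  refine Real.rpow_le_one_of_one_le_of_nonpos ?_ (by linarith)
  rw [Prod.norm_def, le_max_iff, Real.norm_eq_abs, Real.norm_eq_abs] at hp
  rcases hp with h | h
  · have h2 : 1 ≤ p.1 ^ 2 := (one_le_sq_iff_one_le_abs _).2 h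
    nlinarith [sq_nonneg p.2]
  · have h2 : 1 ≤ p.2 ^ 2 := (one_le_sq_iff_one_le_abs _).2 h
    nlinarith [sq_nonneg (p.1 ^ 2)]

theorem one_add_norm_rpow_le_weight (p : ℝ × ℝ) :
    (1 + ‖p‖) ^ (-((4 : ℕ) : ℝ)) ≤ (1 + p.1 ^ 2)⁻¹ * (1 + p.2 ^ 2)⁻¹ := by
  rw [Real.rpow_neg (by positivity), Real.rpow_natCast, ← mul_inv]
  have h1 : |p.1| ≤ ‖p‖ := norm_fst_le p
  have h2 : |p.2| ≤ ‖p‖ := norm_snd_le p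
  have e1 : 1 + p.1 ^ 2 ≤ (1 + ‖p‖) ^ 2 := by
    rw [← sq_abs]; nlinarith [abs_nonneg p.1]
  have e2 : 1 + p.2 ^ 2 ≤ (1 + ‖p‖) ^ 2 := by
    rw [← sq_abs]; nlinarith [abs_nonneg p.2]
  have : (1 + p.1 ^ 2) * (1 + p.2 ^ 2) ≤ (1 + ‖p‖) ^ 4 := by
    calc _ ≤ (1 + ‖p‖) ^ 2 * (1 + ‖p‖) ^ 2 := by gcongr
      _ = _ := by ring
  exact inv_anti₀ (by positivity) this

/-- Schwartz functions are dominated by a product weight, for which the integrability of the kernel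
reduces to one-variable integrals. -/
theorem schwartz_le_weight {F : Type*} [NormedAddCommGroup F] [NormedSpace ℝ F]
    (φ : 𝓢(ℝ × ℝ, F)) :
    ∃ C, 0 < C ∧ ∀ p, ‖φ p‖ ≤ C * ((1 + p.1 ^ 2)⁻¹ * (1 + p.2 ^ 2)⁻¹) := by
  set S := 2 ^ 4 * ((Finset.Iic ((4, 0) : ℕ × ℕ)).sup
    (fun m' => SchwartzMap.seminorm ℝ m'.1 m'.2) φ) with hS
  have hS0 : 0 ≤ S := by positivity
  refine ⟨S + 1, by positivity, fun p => ?_⟩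
  have h := SchwartzMap.one_add_le_sup_seminorm_apply (𝕜 := ℝ) (m := (4, 0)) (k := 4) (n := 0)
    le_rfl le_rfl φ p
  rw [norm_iteratedFDeriv_zero] at h
  have hb : ‖φ p‖ ≤ S * (1 + ‖p‖) ^ (-((4 : ℕ) : ℝ)) := by
    rw [Real.rpow_neg (by positivity), Real.rpow_natCast, ← div_eq_mul_inv,
      le_div_iff₀' (by positivity)]
    exact h
  calc _ ≤ _ := hb
    _ ≤ (S + 1) * _ := by
      gcongr
      · linarith
      · exact one_add_norm_rpow_le_weight p

theorem integrable_schwartz_mul_koranyiKernel {s : ℝ} (hs : s ∈ Ioo (0 : ℝ) 3)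
    {F : Type*} [NormedAddCommGroup F] [NormedSpace ℝ F] (φ : 𝓢(ℝ × ℝ, F)) :
    Integrable (fun p : ℝ × ℝ => ‖φ p‖ * koranyiKernel s p) := by
  obtain ⟨C, hC, h⟩ := schwartz_le_weight φ
  refine ((integrable_weight_mul_koranyiKernel hs).const_mul C).mono'
    (φ.continuous.norm.aestronglyMeasurable.mul (by fun_prop)) (Eventually.of_forall fun p => ?_)
  have h0 := koranyiKernel_nonneg s p
  rw [Real.norm_of_nonneg (by positivity), ← mul_assoc]
  gcongr
  exact h p

theorem exists_koranyiDistribution {s : ℝ} (hs : s ∈ Ioo (0 : ℝ) 3) :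
    ∃ T : SchwartzMap (ℝ × ℝ) ℝ →L[ℝ] ℝ, ∀ φ : SchwartzMap (ℝ × ℝ) ℝ,
      T φ = ∫ p : ℝ × ℝ, φ p * koranyiKernel s p := by
  have hm : Measurable fun p => ENNReal.ofReal (koranyiKernel s p) := by fun_prop
  have hfin : ∀ᵐ p : ℝ × ℝ, ENNReal.ofReal (koranyiKernel s p) < ⊤ := by simp
  set μ : Measure (ℝ × ℝ) := volume.withDensity fun p => ENNReal.ofReal (koranyiKernel s p) with hμ
  have : μ.HasTemperateGrowth := by
    refine ⟨⟨4, ?_⟩⟩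
    rw [hμ, integrable_withDensity_iff_integrable_smul' hm hfin]
    refine (integrable_weight_mul_koranyiKernel hs).mono'
      (Measurable.aestronglyMeasurable (by fun_prop)) (Eventually.of_forall fun p => ?_)
    have h0 := koranyiKernel_nonneg s p
    rw [ENNReal.toReal_ofReal h0, smul_eq_mul, Real.norm_of_nonneg (by positivity), mul_comm]
    gcongr
    exact one_add_norm_rpow_le_weight p
  refine ⟨SchwartzMap.integralCLM ℝ μ, fun φ => ?_⟩
  rw [SchwartzMap.integralCLM_apply, hμ, integral_withDensity_eq_integral_toReal_smul hm hfin]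
  congr with p
  rw [ENNReal.toReal_ofReal (koranyiKernel_nonneg s p), smul_eq_mul, mul_comm]

/-! ### The cone representation of the kernel -/

theorem integrableOn_rpow_mul_cexp {α : ℝ} (hα : 0 < α) {r : ℂ} (hr : 0 < r.re) :
    IntegrableOn (fun x : ℝ => ((x ^ (α - 1) : ℝ) : ℂ) * Complex.exp (-r * x)) (Ioi 0) := by
  have h : IntegrableOn (fun x : ℝ => x ^ (α - 1) * Real.exp (-r.re * x)) (Ioi 0) := by
    simpa using integrableOn_rpow_mul_exp_neg_mul_rpow (p := 1) (by linarith : -1 < α - 1)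
      one_pos hr
  refine h.mono' (Measurable.aestronglyMeasurable (by fun_prop)) ?_
  filter_upwards [ae_restrict_mem measurableSet_Ioi] with x hx
  have hx' : (0 : ℝ) < x := hx
  rw [norm_mul, Complex.norm_real, Real.norm_of_nonneg (by positivity), Complex.norm_exp]
  simp

/-- Euler's integral `∫₀^∞ x^{α-1} e^{-rx} dx = Γ(α) r^{-α}` for complex `r` in the right
half-plane, by analytic continuation from `r > 0`. -/
theorem integral_rpow_mul_cexp {α : ℝ} (hα : 0 < α) {r : ℂ} (hr : 0 < r.re) :
    ∫ x : ℝ in Ioi 0, ((x ^ (α - 1) : ℝ) : ℂ) * Complex.exp (-r * x) =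
      r ^ (-(α : ℂ)) * Real.Gamma α := by
  have hm : Measurable fun x : ℝ => ENNReal.ofReal (x ^ (α - 1)) := by fun_prop
  have hfin : ∀ᵐ x : ℝ ∂(volume.restrict (Ioi 0)), ENNReal.ofReal (x ^ (α - 1)) < ⊤ := by simp
  set μ : Measure ℝ := (volume.restrict (Ioi 0)).withDensity
    fun x => ENNReal.ofReal (x ^ (α - 1)) with hμ
  have hf : ∀ z : ℂ, ProbabilityTheory.complexMGF id μ z =
      ∫ x : ℝ in Ioi 0, ((x ^ (α - 1) : ℝ) : ℂ) * Complex.exp (z * x) := by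
    intro z
    rw [ProbabilityTheory.complexMGF, hμ, integral_withDensity_eq_integral_toReal_smul hm hfin]
    refine setIntegral_congr_fun measurableSet_Ioi fun x hx => ?_
    have hx' : (0 : ℝ) < x := hx
    simp only [id]
    rw [ENNReal.toReal_ofReal (by positivity), Complex.real_smul]
  have hset : Iio 0 ⊆ interior (ProbabilityTheory.integrableExpSet id μ) := by
    refine interior_maximal (fun t ht => ?_) isOpen_Iio
    have ht' : t < 0 := ht
    change Integrable (fun x => Real.exp (t * id x)) μ
    rw [hμ, integrable_withDensity_iff_integrable_smul' hm hfin]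
    have h : IntegrableOn (fun x : ℝ => x ^ (α - 1) * Real.exp (-(-t) * x)) (Ioi 0) := by
      simpa using integrableOn_rpow_mul_exp_neg_mul_rpow (p := 1) (by linarith : -1 < α - 1)
        one_pos (by linarith : 0 < -t)
    refine h.congr_fun (fun x hx => ?_) measurableSet_Ioi
    have hx' : (0 : ℝ) < x := hx
    simp only [id, neg_neg]
    rw [ENNReal.toReal_ofReal (by positivity), smul_eq_mul]
  have hopen : IsOpen {z : ℂ | z.re < 0} := isOpen_lt Complex.continuous_re continuous_const
  have h1 : AnalyticOnNhd ℂ (ProbabilityTheory.complexMGF id μ) {z : ℂ | z.re < 0} :=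
    (ProbabilityTheory.differentiableOn_complexMGF.mono fun z hz => hset hz).analyticOnNhd hopen
  have h2 : AnalyticOnNhd ℂ (fun z : ℂ => (-z) ^ (-(α : ℂ)) * Real.Gamma α)
      {z : ℂ | z.re < 0} := by
    refine DifferentiableOn.analyticOnNhd (fun z hz => ?_) hopen
    refine DifferentiableAt.differentiableWithinAt ?_
    refine DifferentiableAt.mul_const (DifferentiableAt.cpow (by fun_prop) (by fun_prop) ?_) _
    have : z.re < 0 := hz
    exact Or.inl (by simpa using this)
  have hconn : IsPreconnected {z : ℂ | z.re < 0} :=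
    (convex_halfSpace_re_lt 0).isPreconnected
  have hreal : ∀ t : ℝ, t < 0 → ProbabilityTheory.complexMGF id μ (t : ℂ) =
      (-(t : ℂ)) ^ (-(α : ℂ)) * Real.Gamma α := by
    intro t ht
    have := Complex.integral_cpow_mul_exp_neg_mul_Ioi (a := α) (r := -t) (by simpa using hα)
      (by linarith)
    rw [hf, ← Complex.Gamma_ofReal, Complex.cpow_neg, ← Complex.inv_cpow]
    · rw [one_div] at this
      push_cast at this
      rw [← this]
      refine setIntegral_congr_fun measurableSet_Ioi fun x hx => ?_
      have hx' : (0 : ℝ) < x := hx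
      rw [Complex.ofReal_cpow hx'.le]
      push_cast
      simp
    · rw [← Complex.ofReal_neg, Complex.arg_ofReal_of_nonneg (by linarith)]
      exact Real.pi_pos.ne
  have hfreq : ∃ᶠ z : ℂ in nhdsWithin (-1) {-1}ᶜ, ProbabilityTheory.complexMGF id μ z =
      (fun z : ℂ => (-z) ^ (-(α : ℂ)) * Real.Gamma α) z := by
    have ht : Tendsto (fun t : ℝ => (t : ℂ)) (nhdsWithin (-1) {-1}ᶜ)
        (nhdsWithin (-1) {-1}ᶜ) := by
      refine tendsto_nhdsWithin_iff.2 ⟨?_, ?_⟩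
      · have : Tendsto (fun t : ℝ => (t : ℂ)) (nhds (-1)) (nhds ((-1 : ℝ) : ℂ)) :=
          Complex.continuous_ofReal.tendsto _
        simpa using this.mono_left nhdsWithin_le_nhds
      · filter_upwards [self_mem_nhdsWithin] with t ht
        have ht' : t ≠ -1 := by simpa using ht
        simpa using (fun h : (t : ℂ) = -1 => ht' (by exact_mod_cast h))
    refine ht.frequently (Eventually.frequently ?_)
    filter_upwards [mem_nhdsWithin_of_mem_nhds (Iio_mem_nhds (by norm_num : (-1 : ℝ) < 0))]
      with t ht
    exact hreal t ht
  have := h1.eqOn_of_preconnected_of_frequently_eq h2 hconn (by simp) hfreq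
    (show -r ∈ {z : ℂ | z.re < 0} by simpa using hr)
  rw [hf] at this
  simpa using this

/-- The density `(v² - τ²)^{α-1}` on the cone `{q = (τ, v) : |τ| < v}`, extended by zero. -/
noncomputable def coneDensity (α : ℝ) (q : ℝ × ℝ) : ℝ :=
  if |q.1| < q.2 then (q.2 ^ 2 - q.1 ^ 2) ^ (α - 1) else 0

theorem coneDensity_nonneg (α : ℝ) (q : ℝ × ℝ) : 0 ≤ coneDensity α q := by
  unfold coneDensity
  split_ifs with h
  · have : 0 ≤ q.2 ^ 2 - q.1 ^ 2 := by
      have := sq_le_sq' (by linarith [neg_abs_le q.1, abs_nonneg q.1]) h.le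
      rw [sq_abs] at this
      linarith
    positivity
  · exact le_rfl

@[fun_prop]
theorem measurable_coneDensity (α : ℝ) : Measurable (coneDensity α) := by
  unfold coneDensity
  refine Measurable.ite ?_ (by fun_prop) (by fun_prop)
  exact measurableSet_lt (by fun_prop) (by fun_prop)

/-- The change of variables `(τ, v) ↦ (v - τ, v + τ)`, which carries the cone to the open first
quadrant. -/
noncomputable def coneMap : (ℝ × ℝ) →ₗ[ℝ] (ℝ × ℝ) :=
  Matrix.toLin (Module.Basis.finTwoProd ℝ) (Module.Basis.finTwoProd ℝ) !![-1, 1; 1, 1]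

theorem coneMap_apply (q : ℝ × ℝ) : coneMap q = (q.2 - q.1, q.2 + q.1) := by
  rw [coneMap, Matrix.toLin_finTwoProd_apply]
  ext <;> simp <;> ring

theorem map_coneMap : Measure.map coneMap volume = ENNReal.ofReal (1 / 2) •
    (volume : Measure (ℝ × ℝ)) := by
  have hdet : LinearMap.det coneMap = -2 := by
    rw [coneMap, LinearMap.det_toLin, Matrix.det_fin_two_of]; norm_num
  rw [Measure.map_linearMap_addHaar_eq_smul_addHaar _ (by rw [hdet]; norm_num), hdet]
  norm_num

/-- The one-variable factor `x^{α-1} e^{-rx}` on the half-line, extended by zero. -/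
noncomputable def eulerFactor (α : ℝ) (r : ℂ) : ℝ → ℂ :=
  indicator (Ioi 0) fun x : ℝ => ((x ^ (α - 1) : ℝ) : ℂ) * Complex.exp (-r * x)

theorem eulerFactor_mul (α b t : ℝ) (q : ℝ × ℝ) :
    eulerFactor α (π * (b + t * Complex.I)) (coneMap q).1 *
      eulerFactor α (π * (b - t * Complex.I)) (coneMap q).2 =
    (coneDensity α q : ℂ) * Complex.exp (-(2 * π * q.2 * b : ℝ) + (2 * π * (t * q.1) : ℝ) * Complex.I) := by
  rw [coneMap_apply]
  by_cases h : |q.1| < q.2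
  · have h1 := abs_lt.1 h
    have e1 : 0 < q.2 - q.1 := by linarith
    have e2 : 0 < q.2 + q.1 := by linarith
    rw [eulerFactor, indicator_of_mem (by exact e1), eulerFactor, indicator_of_mem (by exact e2),
      coneDensity, if_pos h, show q.2 ^ 2 - q.1 ^ 2 = (q.2 - q.1) * (q.2 + q.1) by ring,
      Real.mul_rpow e1.le e2.le, mul_mul_mul_comm, ← Complex.exp_add]
    push_cast
    congr 2
    ring
  · rw [coneDensity, if_neg h]
    have : ¬ (0 < q.2 - q.1) ∨ ¬ (0 < q.2 + q.1) := by
      by_contra! hc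
      exact h (abs_lt.2 ⟨by linarith [hc.2], by linarith [hc.1]⟩)
    rcases this with h' | h'
    · rw [eulerFactor, indicator_of_notMem (by exact h')]; simp
    · nth_rw 2 [eulerFactor]
      rw [indicator_of_notMem (by exact h')]; simp

theorem integrable_eulerFactor {α : ℝ} (hα : 0 < α) {r : ℂ} (hr : 0 < r.re) :
    Integrable (eulerFactor α r) :=
  (integrable_indicator_iff measurableSet_Ioi).2 (integrableOn_rpow_mul_cexp hα hr)

theorem integrable_cone {α : ℝ} (hα : 0 < α) {b : ℝ} (hb : 0 < b) (t : ℝ) :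
    Integrable fun q : ℝ × ℝ => (coneDensity α q : ℂ) *
      Complex.exp (-(2 * π * q.2 * b : ℝ) + (2 * π * (t * q.1) : ℝ) * Complex.I) := by
  have h := (integrable_eulerFactor hα (r := π * (b + t * Complex.I))
    (by simp; positivity)).mul_prod (integrable_eulerFactor hα (r := π * (b - t * Complex.I))
    (by simp; positivity))
  have h2 := h.smul_measure (c := ENNReal.ofReal (1 / 2)) (by simp)
  rw [← Measure.volume_eq_prod, ← map_coneMap] at h2
  have h3 := h2.comp_measurable coneMap.continuous_of_finiteDimensional.measurable
  exact h3.congr (Eventually.of_forall fun q => eulerFactor_mul α b t q)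

/-- Multiplying Euler's integrals for `(b + it)^{-α}` and `(b - it)^{-α}` exhibits
`(b² + t²)^{-α}` as a superposition of characters in `t`. -/
theorem integral_cone {α : ℝ} (hα : 0 < α) {b : ℝ} (hb : 0 < b) (t : ℝ) :
    ∫ q : ℝ × ℝ, (coneDensity α q : ℂ) *
      Complex.exp (-(2 * π * q.2 * b : ℝ) + (2 * π * (t * q.1) : ℝ) * Complex.I) =
    ((1 / 2 * π ^ (-(2 * α)) * Real.Gamma α ^ 2 * (b ^ 2 + t ^ 2) ^ (-α) : ℝ) : ℂ) := by
  have hr1 : 0 < (π * (b + t * Complex.I) : ℂ).re := by simp; positivity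
  have hr2 : 0 < (π * (b - t * Complex.I) : ℂ).re := by simp; positivity
  have hF := (integrable_eulerFactor hα hr1).mul_prod (integrable_eulerFactor hα hr2)
  have h1 : ∫ q : ℝ × ℝ, eulerFactor α (π * (b + t * Complex.I)) q.1 *
      eulerFactor α (π * (b - t * Complex.I)) q.2 ∂(Measure.map coneMap volume) =
      ∫ q : ℝ × ℝ, (coneDensity α q : ℂ) *
        Complex.exp (-(2 * π * q.2 * b : ℝ) + (2 * π * (t * q.1) : ℝ) * Complex.I) := by
    rw [integral_map coneMap.continuous_of_finiteDimensional.measurable.aemeasurable]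
    · exact integral_congr_ae (Eventually.of_forall fun q => eulerFactor_mul α b t q)
    · rw [map_coneMap]
      exact (hF.smul_measure (c := ENNReal.ofReal (1 / 2)) (by simp)).aestronglyMeasurable
  rw [← h1, map_coneMap, integral_smul_measure, Measure.volume_eq_prod, integral_prod_mul]
  simp only [eulerFactor]
  rw [integral_indicator measurableSet_Ioi, integral_indicator measurableSet_Ioi,
    integral_rpow_mul_cexp hα hr1, integral_rpow_mul_cexp hα hr2]
  set z : ℂ := π * (b + t * Complex.I) with hz
  have hconj : (π * (b - t * Complex.I) : ℂ) = (starRingEnd ℂ) z := by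
    simp [hz, sub_eq_add_neg]
  have harg : z.arg ≠ π := by
    intro h
    rw [Complex.arg_eq_pi_iff] at h
    linarith [h.1]
  have hzz : z ^ (-(α : ℂ)) * ((starRingEnd ℂ) z) ^ (-(α : ℂ)) =
      ((π ^ (-(2 * α)) * (b ^ 2 + t ^ 2) ^ (-α) : ℝ) : ℂ) := by
    have e : ((starRingEnd ℂ) z) ^ (-(α : ℂ)) = (starRingEnd ℂ) (z ^ (-(α : ℂ))) := by
      rw [Complex.conj_cpow _ _ harg]; simp
    have hn : ‖z‖ = π * √(b ^ 2 + t ^ 2) := by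
      rw [hz, norm_mul, Complex.norm_real, Real.norm_of_nonneg Real.pi_pos.le,
        Complex.norm_add_mul_I]
    rw [e, Complex.mul_conj, Complex.normSq_eq_norm_sq, ← Complex.ofReal_neg,
      Complex.norm_cpow_real, hn, Real.mul_rpow Real.pi_pos.le (by positivity), mul_pow,
      ← Real.rpow_natCast, ← Real.rpow_natCast, ← Real.rpow_mul Real.pi_pos.le,
      ← Real.rpow_mul (by positivity), Real.sqrt_eq_rpow, ← Real.rpow_mul (by positivity)]
    congr 3 <;> push_cast <;> ring
  rw [hconj, mul_mul_mul_comm, hzz, Complex.real_smul]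
  rw [ENNReal.toReal_ofReal (by norm_num)]
  push_cast
  ring

/-! ### The scaling profile -/

/-- The one-dimensional Gaussian `(2v)^{-1/2} e^{-πξ²/(2v)}`, the Fourier transform of
`x ↦ e^{-2πvx²}` for `v > 0`. -/
noncomputable def gaussFactor (ξ v : ℝ) : ℝ :=
  (2 * v) ^ (-(1 / 2 : ℝ)) * Real.exp (-(π * ξ ^ 2 / (2 * v)))

/-- The profile `h(u) = (u² - 1)^{α-1} (2u)^{-1/2}` left after scaling `v = |τ| u`. -/
noncomputable def coneProfile (α u : ℝ) : ℝ :=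
  (u ^ 2 - 1) ^ (α - 1) * (2 * u) ^ (-(1 / 2 : ℝ))

theorem coneProfile_pos (α : ℝ) {u : ℝ} (hu : 1 < u) : 0 < coneProfile α u := by
  have : 0 < u ^ 2 - 1 := by nlinarith
  unfold coneProfile
  positivity

@[fun_prop]
theorem measurable_coneProfile (α : ℝ) : Measurable (coneProfile α) := by
  unfold coneProfile; fun_prop

theorem coneProfile_le_tail {α : ℝ} (hα0 : 0 < α) (hα1 : α < 3 / 4) {u : ℝ} (hu : 2 < u) :
    coneProfile α u ≤ 2 * u ^ (-(3 / 2 - 2 * α) - 1) := by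
  have hu0 : 0 < u := by linarith
  have h1 : (u ^ 2 - 1) ^ (α - 1) ≤ 2 * u ^ (2 * α - 2) := by
    calc (u ^ 2 - 1) ^ (α - 1) ≤ (u ^ 2 * 2⁻¹) ^ (α - 1) :=
          Real.rpow_le_rpow_of_nonpos (by positivity) (by nlinarith) (by linarith)
      _ = u ^ (2 * α - 2) * 2 ^ (1 - α) := by
          rw [Real.mul_rpow (by positivity) (by positivity), ← Real.rpow_natCast,
            ← Real.rpow_mul hu0.le, Real.inv_rpow (by norm_num), ← Real.rpow_neg (by norm_num)]
          congr 2 <;> push_cast <;> ring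
      _ ≤ u ^ (2 * α - 2) * 2 ^ (1 : ℝ) := by
          gcongr
          · norm_num
          · linarith
      _ = _ := by rw [Real.rpow_one]; ring
  have h2 : (2 * u) ^ (-(1 / 2 : ℝ)) ≤ u ^ (-(1 / 2 : ℝ)) :=
    Real.rpow_le_rpow_of_nonpos hu0 (by linarith) (by norm_num)
  calc coneProfile α u ≤ (2 * u ^ (2 * α - 2)) * u ^ (-(1 / 2 : ℝ)) := by
        unfold coneProfile; gcongr
    _ = _ := by
        rw [mul_assoc, ← Real.rpow_add hu0]; congr 2; ring

theorem integrableOn_coneProfile {α : ℝ} (hα0 : 0 < α) (hα1 : α < 3 / 4) :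
    IntegrableOn (coneProfile α) (Ioi 1) := by
  rw [← Ioc_union_Ioi_eq_Ioi (by norm_num : (1 : ℝ) ≤ 2)]
  refine IntegrableOn.union ?_ ?_
  · have h : IntegrableOn (fun u : ℝ => (u - 1) ^ (α - 1)) (Ioc 1 2) := by
      have := (intervalIntegral.intervalIntegrable_rpow' (a := 0) (b := 1)
        (by linarith : -1 < α - 1)).comp_sub_right 1
      rw [intervalIntegrable_iff_integrableOn_Ioc_of_le (by norm_num)] at this
      norm_num at this
      exact this
    refine h.mono' (by fun_prop) ?_
    filter_upwards [ae_restrict_mem measurableSet_Ioc] with u hu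
    rw [Real.norm_of_nonneg (coneProfile_pos α hu.1).le]
    have hu1 : 0 < u - 1 := by linarith [hu.1]
    have hu0 : 0 < u := by linarith [hu.1]
    have e : (u ^ 2 - 1) ^ (α - 1) ≤ (u - 1) ^ (α - 1) :=
      Real.rpow_le_rpow_of_nonpos hu1 (by nlinarith) (by linarith)
    have e2 : (2 * u) ^ (-(1 / 2 : ℝ)) ≤ 1 :=
      Real.rpow_le_one_of_one_le_of_nonpos (by linarith) (by norm_num)
    calc coneProfile α u ≤ (u - 1) ^ (α - 1) * 1 := by
          unfold coneProfile; gcongr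
      _ = _ := mul_one _
  · have h := (integrableOn_Ioi_rpow_of_lt (by linarith : -(3 / 2 - 2 * α) - 1 < -1)
      (by norm_num : (0 : ℝ) < 2)).const_mul 2
    refine h.mono' (by fun_prop) ?_
    filter_upwards [ae_restrict_mem measurableSet_Ioi] with u hu
    have hu' : 2 < u := hu
    rw [Real.norm_of_nonneg (coneProfile_pos α (by linarith)).le]
    exact coneProfile_le_tail hα0 hα1 hu

/-- Euler's integral after the inversion `u ↦ 1/u`. -/
theorem integral_rpow_mul_exp_inv {β c : ℝ} (hβ : 0 < β) (hc : 0 < c) :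
    IntegrableOn (fun u : ℝ => u ^ (-β - 1) * Real.exp (-(c / u))) (Ioi 0) ∧
    ∫ u in Ioi 0, u ^ (-β - 1) * Real.exp (-(c / u)) = (1 / c) ^ β * Real.Gamma β := by
  have e : EqOn (fun x : ℝ => (|(-1 : ℝ)| * x ^ ((-1 : ℝ) - 1)) •
      (fun y : ℝ => y ^ (β - 1) * Real.exp (-(c * y))) (x ^ (-1 : ℝ)))
      (fun u : ℝ => u ^ (-β - 1) * Real.exp (-(c / u))) (Ioi 0) := by
    intro x hx
    have hx' : (0 : ℝ) < x := hx
    simp only [smul_eq_mul, abs_neg, abs_one, one_mul]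
    rw [← mul_assoc, ← Real.rpow_mul hx'.le, ← Real.rpow_add hx', Real.rpow_neg_one,
      div_eq_mul_inv]
    congr 2
    ring
  have hi : IntegrableOn (fun y : ℝ => y ^ (β - 1) * Real.exp (-(c * y))) (Ioi 0) := by
    simpa using integrableOn_rpow_mul_exp_neg_mul_rpow (p := 1) (by linarith : -1 < β - 1)
      one_pos hc
  constructor
  · exact ((integrableOn_Ioi_comp_rpow_iff _ (by norm_num : (-1 : ℝ) ≠ 0)).2 hi).congr_fun e
      measurableSet_Ioi
  · rw [← setIntegral_congr_fun measurableSet_Ioi e,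
      integral_comp_rpow_Ioi (fun y : ℝ => y ^ (β - 1) * Real.exp (-(c * y)))
        (by norm_num : (-1 : ℝ) ≠ 0),
      Real.integral_rpow_mul_exp_neg_mul_Ioi hβ hc]

/-- The scaled integral `H(w) = ∫₁^∞ h(u) e^{-πw/(2u)} du`. -/
noncomputable def profileIntegral (α w : ℝ) : ℝ :=
  ∫ u in Ioi 1, coneProfile α u * Real.exp (-(π * w / (2 * u)))

theorem integrableOn_coneProfile_mul_exp {α : ℝ} (hα0 : 0 < α) (hα1 : α < 3 / 4) {w : ℝ}
    (hw : 0 ≤ w) :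
    IntegrableOn (fun u => coneProfile α u * Real.exp (-(π * w / (2 * u)))) (Ioi 1) := by
  refine (integrableOn_coneProfile hα0 hα1).mono' (by fun_prop) ?_
  filter_upwards [ae_restrict_mem measurableSet_Ioi] with u hu
  have hu' : 1 < u := hu
  have h0 := coneProfile_pos α hu'
  rw [Real.norm_of_nonneg (by positivity)]
  refine mul_le_of_le_one_right h0.le (Real.exp_le_one_iff.2 ?_)
  have : 0 ≤ π * w / (2 * u) := by positivity
  linarith

theorem profileIntegral_pos {α : ℝ} (hα0 : 0 < α) (hα1 : α < 3 / 4) {w : ℝ}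
    (hw : 0 ≤ w) : 0 < profileIntegral α w := by
  unfold profileIntegral
  have hpos : ∀ u ∈ Ioi (1 : ℝ), 0 < coneProfile α u * Real.exp (-(π * w / (2 * u))) :=
    fun u hu => mul_pos (coneProfile_pos α hu) (Real.exp_pos _)
  rw [setIntegral_pos_iff_support_of_nonneg_ae _ (integrableOn_coneProfile_mul_exp hα0 hα1 hw)]
  · have hsub : Ioi (1 : ℝ) ⊆
        Function.support fun u => coneProfile α u * Real.exp (-(π * w / (2 * u))) :=
      fun u hu => (hpos u hu).ne'
    rw [inter_eq_right.2 hsub]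
    simp
  · filter_upwards [ae_restrict_mem measurableSet_Ioi] with u hu
    exact (hpos u hu).le

theorem profileIntegral_le_const {α : ℝ} (hα0 : 0 < α) (hα1 : α < 3 / 4) {w : ℝ}
    (hw : 0 ≤ w) : profileIntegral α w ≤ ∫ u in Ioi 1, coneProfile α u := by
  refine setIntegral_mono_on (integrableOn_coneProfile_mul_exp hα0 hα1 hw)
    (integrableOn_coneProfile hα0 hα1) measurableSet_Ioi fun u hu => ?_
  have hu' : (1 : ℝ) < u := hu
  refine mul_le_of_le_one_right (coneProfile_pos α hu).le (Real.exp_le_one_iff.2 ?_)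
  have : 0 ≤ π * w / (2 * u) := by positivity
  linarith

/-- Decay of `H`: the part `u > 2` is dominated by Euler's integral, while on `(1, 2]` the
exponential factor is at most `e^{-πw/4}`. -/
theorem profileIntegral_le_rpow {α : ℝ} (hα0 : 0 < α) (hα1 : α < 3 / 4) :
    ∃ C, 0 ≤ C ∧ ∀ w, 0 < w → profileIntegral α w ≤ C * w ^ (-(3 / 2 - 2 * α)) := by
  set β := 3 / 2 - 2 * α with hβdef
  have hβ : 0 < β := by rw [hβdef]; linarith
  set M := ∫ u in Ioi 1, coneProfile α u with hM
  have hM0 : 0 ≤ M := setIntegral_nonneg measurableSet_Ioi fun u hu => (coneProfile_pos α hu).le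
  have hG := Real.Gamma_pos_of_pos hβ
  refine ⟨M * (π / (4 * β)) ^ (-β) + 2 * ((π / 2) ^ (-β) * Real.Gamma β), by positivity,
    fun w hw => ?_⟩
  have hintg := integrableOn_coneProfile_mul_exp hα0 hα1 hw.le
  have hI := integrableOn_coneProfile hα0 hα1
  have hsub1 : Ioc (1 : ℝ) 2 ⊆ Ioi 1 := Ioc_subset_Ioi_self
  have hsub2 : Ioi (2 : ℝ) ⊆ Ioi 1 := Ioi_subset_Ioi (by norm_num)
  have hc : 0 < π / 2 * w := by positivity
  obtain ⟨hE1, hE2⟩ := integral_rpow_mul_exp_inv hβ hc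
  have hA : ∫ u in Ioc 1 2, coneProfile α u * Real.exp (-(π * w / (2 * u))) ≤
      M * (π / (4 * β)) ^ (-β) * w ^ (-β) := by
    -- `e^{-πw/4} = (e^y)^{-β} ≤ y^{-β}` with `y = πw/(4β)`.
    have hexp : Real.exp (-(π * w / 4)) ≤ (π / (4 * β)) ^ (-β) * w ^ (-β) := by
      rw [← Real.mul_rpow (by positivity) hw.le]
      have hy : π / (4 * β) * w ≤ Real.exp (π / (4 * β) * w) := by
        linarith [Real.add_one_le_exp (π / (4 * β) * w)]
      have := Real.rpow_le_rpow_of_nonpos (by positivity) hy (by linarith : -β ≤ 0)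
      rw [← Real.exp_mul] at this
      refine le_trans (le_of_eq ?_) this
      congr 1
      field_simp
    calc _ ≤ ∫ u in Ioc 1 2, coneProfile α u * Real.exp (-(π * w / 4)) := by
          refine setIntegral_mono_on (hintg.mono_set hsub1)
            ((hI.mono_set hsub1).mul_const _) measurableSet_Ioc fun u hu => ?_
          have h0 := coneProfile_pos α hu.1
          have hu0 : 0 < u := by linarith [hu.1]
          have : π * w / 4 ≤ π * w / (2 * u) := by
            apply div_le_div_of_nonneg_left (by positivity) (by positivity)
            linarith [hu.2]
          gcongr
      _ = (∫ u in Ioc 1 2, coneProfile α u) * Real.exp (-(π * w / 4)) := by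
          rw [integral_mul_const]
      _ ≤ M * ((π / (4 * β)) ^ (-β) * w ^ (-β)) := by
          refine mul_le_mul ?_ hexp (Real.exp_pos _).le hM0
          refine setIntegral_mono_set hI ?_ (LE.le.eventuallyLE hsub1)
          filter_upwards [ae_restrict_mem measurableSet_Ioi] with u hu
          exact (coneProfile_pos α hu).le
      _ = _ := by ring
  have hB : ∫ u in Ioi 2, coneProfile α u * Real.exp (-(π * w / (2 * u))) ≤
      2 * ((π / 2) ^ (-β) * Real.Gamma β) * w ^ (-β) := by
    have hsub3 : Ioi (2 : ℝ) ⊆ Ioi 0 := Ioi_subset_Ioi (by norm_num)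
    calc _ ≤ ∫ u in Ioi 2, 2 * (u ^ (-β - 1) * Real.exp (-(π / 2 * w / u))) := by
          refine setIntegral_mono_on (hintg.mono_set hsub2)
            ((hE1.mono_set hsub3).const_mul 2) measurableSet_Ioi fun u hu => ?_
          have hu' : (2 : ℝ) < u := hu
          have h1 := coneProfile_le_tail hα0 hα1 hu'
          have e : π * w / (2 * u) = π / 2 * w / u := by field_simp
          rw [e, ← mul_assoc]
          gcongr
      _ = 2 * ∫ u in Ioi 2, u ^ (-β - 1) * Real.exp (-(π / 2 * w / u)) := by
          rw [integral_const_mul]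
      _ ≤ 2 * ∫ u in Ioi 0, u ^ (-β - 1) * Real.exp (-(π / 2 * w / u)) := by
          refine mul_le_mul_of_nonneg_left ?_ (by norm_num)
          refine setIntegral_mono_set hE1 ?_ (LE.le.eventuallyLE hsub3)
          filter_upwards [ae_restrict_mem measurableSet_Ioi] with u hu
          have hu' : (0 : ℝ) < u := hu
          positivity
      _ = _ := by
          rw [hE2, one_div, Real.inv_rpow (by positivity), ← Real.rpow_neg (by positivity),
            Real.mul_rpow (by positivity) hw.le]
          ring
  unfold profileIntegral
  rw [← Ioc_union_Ioi_eq_Ioi (by norm_num : (1 : ℝ) ≤ 2),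
    setIntegral_union (Ioc_disjoint_Ioi le_rfl) measurableSet_Ioi (hintg.mono_set hsub1)
      (hintg.mono_set hsub2)]
  linarith

theorem profileIntegral_le {α : ℝ} (hα0 : 0 < α) (hα1 : α < 3 / 4) :
    ∃ C, 0 < C ∧ ∀ w, 0 ≤ w →
      profileIntegral α w ≤ C * (1 + w ^ 2) ^ (-((3 / 2 - 2 * α) / 2)) := by
  obtain ⟨C, hC, h⟩ := profileIntegral_le_rpow hα0 hα1
  set β := 3 / 2 - 2 * α with hβdef
  have hβ : 0 < β := by rw [hβdef]; linarith
  set M := ∫ u in Ioi 1, coneProfile α u with hM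
  have hM0 : 0 ≤ M := setIntegral_nonneg measurableSet_Ioi fun u hu => (coneProfile_pos α hu).le
  refine ⟨(M + C + 1) * 2 ^ (β / 2), by positivity, fun w hw => ?_⟩
  by_cases hw1 : w ≤ 1
  · have h1 : (2 : ℝ) ^ (-(β / 2)) ≤ (1 + w ^ 2) ^ (-(β / 2)) :=
      Real.rpow_le_rpow_of_nonpos (by positivity) (by nlinarith) (by linarith)
    calc _ ≤ M := profileIntegral_le_const hα0 hα1 hw
      _ ≤ M + C + 1 := by linarith
      _ = (M + C + 1) * 2 ^ (β / 2) * 2 ^ (-(β / 2)) := by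
          rw [mul_assoc, ← Real.rpow_add (by norm_num)]; simp
      _ ≤ _ := by gcongr
  · have hw0 : 0 < w := by linarith
    have h1 : (2 : ℝ) ^ (-(β / 2)) * w ^ (-β) ≤ (1 + w ^ 2) ^ (-(β / 2)) := by
      have := Real.rpow_le_rpow_of_nonpos (by positivity) (by nlinarith : 1 + w ^ 2 ≤ 2 * w ^ 2)
        (by linarith : -(β / 2) ≤ 0)
      rw [Real.mul_rpow (by norm_num) (by positivity), ← Real.rpow_natCast w 2,
        ← Real.rpow_mul hw] at this
      convert this using 3
      · push_cast; ring
      · norm_cast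
    calc _ ≤ C * w ^ (-β) := h w hw0
      _ ≤ (M + C + 1) * w ^ (-β) := by gcongr; linarith
      _ = (M + C + 1) * 2 ^ (β / 2) * (2 ^ (-(β / 2)) * w ^ (-β)) := by
          rw [← mul_assoc, mul_assoc (M + C + 1), ← Real.rpow_add (by norm_num)]; simp
      _ ≤ _ := by gcongr

/-! ### The Fourier transform of the kernel and its bounds -/

@[fun_prop]
theorem measurable_gaussFactor : Measurable fun p : ℝ × ℝ => gaussFactor p.1 p.2 := by
  unfold gaussFactor; fun_prop

theorem gaussFactor_nonneg (ξ : ℝ) {v : ℝ} (hv : 0 ≤ v) : 0 ≤ gaussFactor ξ v := by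
  unfold gaussFactor; positivity

theorem coneDensity_mul_gaussFactor_nonneg (α ξ τ v : ℝ) :
    0 ≤ coneDensity α (τ, v) * gaussFactor ξ v := by
  by_cases h : |τ| < v
  · exact mul_nonneg (coneDensity_nonneg _ _) (gaussFactor_nonneg _ ((abs_nonneg τ).trans h.le))
  · simp [coneDensity, h]

/-- The Fourier transform of the Korányi kernel, up to a positive constant: a superposition over
`v > |τ|` of Gaussians in `ξ`, where `p = (ξ, τ)`. -/
noncomputable def coneFourier (α : ℝ) (p : ℝ × ℝ) : ℝ :=
  ∫ v, coneDensity α (p.2, v) * gaussFactor p.1 v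

theorem measurable_coneFourier (α : ℝ) : StronglyMeasurable (coneFourier α) := by
  unfold coneFourier
  refine StronglyMeasurable.integral_prod_right ?_
  refine Measurable.stronglyMeasurable (Measurable.mul ?_ ?_)
  · exact (measurable_coneDensity α).comp (by fun_prop :
      Measurable fun q : (ℝ × ℝ) × ℝ => (q.1.2, q.2))
  · exact measurable_gaussFactor.comp (by fun_prop :
      Measurable fun q : (ℝ × ℝ) × ℝ => (q.1.1, q.2))

theorem cone_scaling {α : ℝ} {τ : ℝ} (hτ : τ ≠ 0) (ξ : ℝ) {u : ℝ} (hu : 1 < u) :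
    ((|τ| * u) ^ 2 - τ ^ 2) ^ (α - 1) * gaussFactor ξ (|τ| * u) =
      |τ| ^ (2 * α - 5 / 2) *
        (coneProfile α u * Real.exp (-(π * (ξ ^ 2 / |τ|) / (2 * u)))) := by
  have hT : 0 < |τ| := abs_pos.2 hτ
  have hu2 : 0 < u ^ 2 - 1 := by nlinarith
  have e1 : (|τ| * u) ^ 2 - τ ^ 2 = |τ| ^ 2 * (u ^ 2 - 1) := by
    rw [← sq_abs τ]; ring
  have e2 : 2 * (|τ| * u) = |τ| * (2 * u) := by ring
  have e3 : π * ξ ^ 2 / (|τ| * (2 * u)) = π * (ξ ^ 2 / |τ|) / (2 * u) := by field_simp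
  have e4 : (|τ| ^ 2) ^ (α - 1) * |τ| ^ (-(1 / 2 : ℝ)) = |τ| ^ (2 * α - 5 / 2) := by
    rw [← Real.rpow_natCast, ← Real.rpow_mul hT.le, ← Real.rpow_add hT]
    congr 1; push_cast; ring
  unfold gaussFactor coneProfile
  rw [e1, e2, e3, Real.mul_rpow (by positivity) hu2.le, Real.mul_rpow hT.le (by linarith), ← e4]
  ring

theorem coneDensity_mul_gaussFactor_eq (α ξ τ : ℝ) :
    (fun v => coneDensity α (τ, v) * gaussFactor ξ v) =
      indicator (Ioi |τ|) fun v => (v ^ 2 - τ ^ 2) ^ (α - 1) * gaussFactor ξ v := by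
  ext v
  by_cases h : |τ| < v
  · rw [indicator_of_mem (by exact h)]; simp [coneDensity, h]
  · rw [indicator_of_notMem (by exact h)]; simp [coneDensity, h]

theorem integrable_coneDensity_mul_gaussFactor {α : ℝ} (hα0 : 0 < α) (hα1 : α < 3 / 4) {τ : ℝ}
    (hτ : τ ≠ 0) (ξ : ℝ) : Integrable fun v => coneDensity α (τ, v) * gaussFactor ξ v := by
  have hT : 0 < |τ| := abs_pos.2 hτ
  rw [coneDensity_mul_gaussFactor_eq, integrable_indicator_iff measurableSet_Ioi]
  have h := (integrableOn_Ioi_comp_mul_left_iff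
    (fun v => (v ^ 2 - τ ^ 2) ^ (α - 1) * gaussFactor ξ v) 1 hT).1
    (IntegrableOn.congr_fun ((integrableOn_coneProfile_mul_exp hα0 hα1
      (w := ξ ^ 2 / |τ|) (by positivity)).const_mul (|τ| ^ (2 * α - 5 / 2)))
      (fun u hu => (cone_scaling hτ ξ hu).symm) measurableSet_Ioi)
  rwa [mul_one] at h

/-- Parabolic scaling `v = |τ| u` reduces `coneFourier` to a function of `ξ²/|τ|` alone. -/
theorem coneFourier_eq {α : ℝ} {τ : ℝ} (hτ : τ ≠ 0) (ξ : ℝ) :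
    coneFourier α (ξ, τ) = |τ| ^ (-(3 / 2 - 2 * α)) * profileIntegral α (ξ ^ 2 / |τ|) := by
  have hT : 0 < |τ| := abs_pos.2 hτ
  unfold coneFourier
  simp only
  rw [coneDensity_mul_gaussFactor_eq, integral_indicator measurableSet_Ioi]
  have h := integral_comp_mul_left_Ioi
    (fun v => (v ^ 2 - τ ^ 2) ^ (α - 1) * gaussFactor ξ v) 1 hT
  rw [setIntegral_congr_fun measurableSet_Ioi (fun u hu => cone_scaling hτ ξ hu),
    integral_const_mul, mul_one, smul_eq_mul] at h
  have e : |τ| ^ (-(3 / 2 - 2 * α)) = |τ| * |τ| ^ (2 * α - 5 / 2) := by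
    nth_rw 2 [← Real.rpow_one |τ|]
    rw [← Real.rpow_add hT]; congr 1; ring
  rw [e, mul_assoc]
  unfold profileIntegral
  rw [h]
  field_simp

theorem coneFourier_pos {α : ℝ} (hα0 : 0 < α) (hα1 : α < 3 / 4) {p : ℝ × ℝ} (hp : p.2 ≠ 0) :
    0 < coneFourier α p := by
  have h := coneFourier_eq (α := α) hp p.1
  have hT : 0 < |p.2| := abs_pos.2 hp
  rw [Prod.mk.eta] at h
  rw [h]
  exact mul_pos (by positivity) (profileIntegral_pos hα0 hα1 (by positivity))

theorem coneFourier_le {s : ℝ} (hs : s ∈ Ioo (0 : ℝ) 3) :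
    ∃ C, 0 < C ∧ ∀ p : ℝ × ℝ, p.2 ≠ 0 → coneFourier (s / 4) p ≤ C * koranyiKernel (3 - s) p := by
  obtain ⟨C, hC, h⟩ := profileIntegral_le (α := s / 4) (by linarith [hs.1]) (by linarith [hs.2])
  refine ⟨C, hC, fun p hp => ?_⟩
  have hT : 0 < |p.2| := abs_pos.2 hp
  have e := coneFourier_eq (α := s / 4) hp p.1
  rw [Prod.mk.eta] at e
  rw [e]
  have e1 : |p.2| ^ (-(3 / 2 - 2 * (s / 4))) = (|p.2| ^ 2) ^ (-((3 / 2 - 2 * (s / 4)) / 2)) := by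
    rw [← Real.rpow_natCast, ← Real.rpow_mul hT.le]; congr 1; push_cast; ring
  have e2 : |p.2| ^ 2 * (1 + (p.1 ^ 2 / |p.2|) ^ 2) = p.1 ^ 4 + p.2 ^ 2 := by
    rw [← sq_abs p.2]; field_simp; ring
  calc _ ≤ |p.2| ^ (-(3 / 2 - 2 * (s / 4))) *
        (C * (1 + (p.1 ^ 2 / |p.2|) ^ 2) ^ (-((3 / 2 - 2 * (s / 4)) / 2))) := by
        gcongr
        exact h _ (by positivity)
    _ = C * (|p.2| ^ 2 * (1 + (p.1 ^ 2 / |p.2|) ^ 2)) ^ (-((3 / 2 - 2 * (s / 4)) / 2)) := by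
        rw [e1, Real.mul_rpow (by positivity) (by positivity)]; ring
    _ = _ := by
        rw [e2, koranyiKernel]; congr 2; ring

/-! ### Fourier transforms of Schwartz functions and Gaussians -/

/-- `fourier2` preserves Schwartz functions, and Fourier inversion holds for it. -/
theorem exists_schwartz_fourier2 (φ : 𝓢(ℝ × ℝ, ℂ)) :
    ∃ ψ : 𝓢(ℝ × ℝ, ℂ), (∀ p, fourier2 (fun q => φ q) p = ψ p) ∧
      ∀ q : ℝ × ℝ, φ q =
        ∫ p : ℝ × ℝ, Complex.exp ((2 * π * (p.1 * q.1 + p.2 * q.2) : ℝ) * Complex.I) * ψ p := by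
  -- Mathlib's Fourier transform lives on inner product spaces, hence the detour by `WithLp 2`.
  set e := WithLp.prodContinuousLinearEquiv 2 ℝ ℝ ℝ with he
  set Φ : 𝓢(WithLp 2 (ℝ × ℝ), ℂ) := SchwartzMap.compCLMOfContinuousLinearEquiv ℝ e φ with hΦ
  have hinner : ∀ a b : WithLp 2 (ℝ × ℝ),
      inner ℝ a b = (e a).1 * (e b).1 + (e a).2 * (e b).2 := by
    intro a b
    rw [WithLp.prod_inner_apply]
    simp [he, mul_comm]
  have hmp : MeasurePreserving (fun a => e a) :=
    WithLp.volume_preserving_ofLp ℝ ℝ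
  have hemb : MeasurableEmbedding (fun a => e a) := e.toHomeomorph.measurableEmbedding
  refine ⟨SchwartzMap.compCLMOfContinuousLinearEquiv ℝ e.symm (FourierTransform.fourier Φ),
    fun p => ?_, fun q => ?_⟩
  · simp only [SchwartzMap.compCLMOfContinuousLinearEquiv_apply, Function.comp_apply,
      SchwartzMap.fourier_coe]
    rw [Real.fourier_eq', fourier2, ← hmp.integral_comp hemb]
    congr with a
    rw [hinner, smul_eq_mul]
    simp only [hΦ, SchwartzMap.compCLMOfContinuousLinearEquiv_apply, Function.comp_apply,
      ContinuousLinearEquiv.apply_symm_apply]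
    congr 2
    push_cast
    ring
  · have hinv : FourierTransformInv.fourierInv (FourierTransform.fourier Φ) = Φ :=
      FourierPair.fourierInv_fourier_eq Φ
    have h1 : φ q = Φ (e.symm q) := by
      simp [hΦ, SchwartzMap.compCLMOfContinuousLinearEquiv_apply]
    rw [h1, ← hinv, SchwartzMap.fourierInv_coe, Real.fourierInv_eq', ← hmp.integral_comp hemb]
    congr with a
    rw [hinner, smul_eq_mul]
    simp [SchwartzMap.compCLMOfContinuousLinearEquiv_apply]

theorem integral_gaussFactor {v : ℝ} (hv : 0 < v) (x : ℝ) :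
    ∫ ξ : ℝ, Complex.exp ((2 * π * (x * ξ) : ℝ) * Complex.I) * (gaussFactor ξ v : ℂ) =
      Complex.exp (-(2 * π * v * x ^ 2 : ℝ)) := by
  have hb : 0 < ((π / (2 * v) : ℝ) : ℂ).re := by
    rw [Complex.ofReal_re]; positivity
  have h := fourierIntegral_gaussian hb ((2 * π * x : ℝ) : ℂ)
  have e : ∀ ξ : ℝ, Complex.exp ((2 * π * (x * ξ) : ℝ) * Complex.I) * (gaussFactor ξ v : ℂ) =
      (((2 * v) ^ (-(1 / 2 : ℝ)) : ℝ) : ℂ) * (Complex.exp (Complex.I * ((2 * π * x : ℝ) : ℂ) * ξ) *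
        Complex.exp (-((π / (2 * v) : ℝ) : ℂ) * ξ ^ 2)) := by
    intro ξ
    rw [gaussFactor, Complex.ofReal_mul ((2 * v) ^ (-(1 / 2 : ℝ))), Complex.ofReal_exp, mul_left_comm]
    congr 2
    · congr 1; push_cast; ring
    · congr 1; push_cast; ring
  simp_rw [e]
  rw [integral_const_mul, h, ← mul_assoc]
  have e1 : ((π : ℂ) / ((π / (2 * v) : ℝ) : ℂ)) ^ (1 / 2 : ℂ) =
      (((2 * v) ^ (1 / 2 : ℝ) : ℝ) : ℂ) := by
    rw [Complex.ofReal_cpow (by positivity), ← Complex.ofReal_div]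
    have : π / (π / (2 * v)) = 2 * v := by field_simp
    rw [this]; push_cast; rfl
  rw [e1, ← Complex.ofReal_mul, ← Real.rpow_add (by positivity)]
  simp only [neg_add_cancel, Real.rpow_zero, Complex.ofReal_one, one_mul]
  congr 1
  have : (π : ℂ) ≠ 0 := by exact_mod_cast Real.pi_pos.ne'
  have : (v : ℂ) ≠ 0 := by exact_mod_cast hv.ne'
  push_cast
  field_simp
  ring

theorem integrable_gaussFactor {v : ℝ} (hv : 0 < v) : Integrable fun ξ => gaussFactor ξ v := by
  have h := (integrable_exp_neg_mul_sq (b := π / (2 * v)) (by positivity)).const_mul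
    ((2 * v) ^ (-(1 / 2 : ℝ)))
  refine h.congr (Eventually.of_forall fun ξ => ?_)
  simp only [gaussFactor]
  congr 2
  ring

/-- Partial Parseval identity: pairing a horizontal slice of `φ` with the Gaussian of parameter `v`
equals pairing its Fourier transform `ψ` with `e^{2πitτ} e^{-2πvx²}`. -/
theorem slice_parseval {φ ψ : 𝓢(ℝ × ℝ, ℂ)}
    (hinv : ∀ q : ℝ × ℝ, φ q =
        ∫ p : ℝ × ℝ, Complex.exp ((2 * π * (p.1 * q.1 + p.2 * q.2) : ℝ) * Complex.I) * ψ p)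
    {v : ℝ} (hv : 0 < v) (τ : ℝ) :
    ∫ ξ : ℝ, φ (ξ, τ) * (gaussFactor ξ v : ℂ) =
      ∫ p : ℝ × ℝ, ψ p *
        Complex.exp (-(2 * π * v * p.1 ^ 2 : ℝ) + (2 * π * (p.2 * τ) : ℝ) * Complex.I) := by
  have hψc : Continuous ψ := ψ.continuous
  have hintg : Integrable (Function.uncurry fun (ξ : ℝ) (p : ℝ × ℝ) =>
      Complex.exp ((2 * π * (p.1 * ξ + p.2 * τ) : ℝ) * Complex.I) * ψ p * (gaussFactor ξ v : ℂ))
      (volume.prod volume) := by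
    have h := (integrable_gaussFactor hv).mul_prod (ψ.integrable (μ := volume)).norm
    refine h.mono' (Measurable.aestronglyMeasurable ?_) (Eventually.of_forall fun z => ?_)
    · have h1 : Measurable fun z : ℝ × (ℝ × ℝ) => ψ z.2 := hψc.measurable.comp measurable_snd
      have h2 : Measurable fun z : ℝ × (ℝ × ℝ) => gaussFactor z.1 v :=
        measurable_gaussFactor.comp (by fun_prop : Measurable fun z : ℝ × (ℝ × ℝ) => (z.1, v))
      simp only [Function.uncurry_def]
      fun_prop
    · simp only [Function.uncurry]
      rw [norm_mul, norm_mul, Complex.norm_exp_ofReal_mul_I, one_mul, Complex.norm_real,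
        Real.norm_of_nonneg (gaussFactor_nonneg _ hv.le), mul_comm]
  calc _ = ∫ ξ : ℝ, ∫ p : ℝ × ℝ,
        Complex.exp ((2 * π * (p.1 * ξ + p.2 * τ) : ℝ) * Complex.I) * ψ p *
          (gaussFactor ξ v : ℂ) := by
        congr with ξ
        rw [hinv (ξ, τ), ← integral_mul_const]
    _ = ∫ p : ℝ × ℝ, ∫ ξ : ℝ,
        Complex.exp ((2 * π * (p.1 * ξ + p.2 * τ) : ℝ) * Complex.I) * ψ p *
          (gaussFactor ξ v : ℂ) := integral_integral_swap hintg
    _ = _ := by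
        congr with p
        have e : ∀ ξ : ℝ, Complex.exp ((2 * π * (p.1 * ξ + p.2 * τ) : ℝ) * Complex.I) * ψ p *
            (gaussFactor ξ v : ℂ) = (ψ p * Complex.exp ((2 * π * (p.2 * τ) : ℝ) * Complex.I)) *
            (Complex.exp ((2 * π * (p.1 * ξ) : ℝ) * Complex.I) * (gaussFactor ξ v : ℂ)) := by
          intro ξ
          rw [mul_add, Complex.ofReal_add, add_mul, Complex.exp_add]
          ring
        simp_rw [e]
        rw [integral_const_mul, integral_gaussFactor hv, mul_assoc, ← Complex.exp_add, add_comm]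

/-! ### The Parseval identity for the kernel -/

theorem measurable_triple (α : ℝ) (φ : 𝓢(ℝ × ℝ, ℂ)) : Measurable fun z : (ℝ × ℝ) × ℝ =>
    φ z.1 * ((coneDensity α (z.1.2, z.2) * gaussFactor z.1.1 z.2 : ℝ) : ℂ) := by
  have h1 : Measurable fun z : (ℝ × ℝ) × ℝ => φ z.1 := φ.continuous.measurable.comp measurable_fst
  have h2 : Measurable fun z : (ℝ × ℝ) × ℝ => coneDensity α (z.1.2, z.2) := by fun_prop
  have h3 : Measurable fun z : (ℝ × ℝ) × ℝ => gaussFactor z.1.1 z.2 :=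
    measurable_gaussFactor.comp
      (by fun_prop : Measurable fun z : (ℝ × ℝ) × ℝ => (z.1.1, z.2))
  fun_prop

/-- Absolute convergence behind the Fubini argument: integrating the norm in `v` gives
`‖φ‖ · coneFourier`, which is dominated by `‖φ‖ · f_{3-s}`. -/
theorem integrable_triple {s : ℝ} (hs : s ∈ Ioo (0 : ℝ) 3) (φ : 𝓢(ℝ × ℝ, ℂ)) :
    Integrable fun z : (ℝ × ℝ) × ℝ =>
      φ z.1 * ((coneDensity (s / 4) (z.1.2, z.2) * gaussFactor z.1.1 z.2 : ℝ) : ℂ) := by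
  have hα0 : 0 < s / 4 := by linarith [hs.1]
  have hα1 : s / 4 < 3 / 4 := by linarith [hs.2]
  obtain ⟨C, hC, hle⟩ := coneFourier_le hs
  refine (integrable_prod_iff (measurable_triple _ φ).aestronglyMeasurable).2 ⟨?_, ?_⟩
  · filter_upwards [ae_ne_zero_snd] with p hp
    exact (integrable_coneDensity_mul_gaussFactor hα0 hα1 hp p.1).ofReal.const_mul _
  · have e : ∀ p : ℝ × ℝ, ∫ v : ℝ,
        ‖φ p * ((coneDensity (s / 4) (p.2, v) * gaussFactor p.1 v : ℝ) : ℂ)‖ =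
        ‖φ p‖ * coneFourier (s / 4) p := by
      intro p
      rw [coneFourier, ← integral_const_mul]
      congr with v
      rw [norm_mul, Complex.norm_real,
        Real.norm_of_nonneg (coneDensity_mul_gaussFactor_nonneg _ _ _ _)]
    simp only [e]
    have hs3 : 3 - s ∈ Ioo (0 : ℝ) 3 := ⟨by linarith [hs.2], by linarith [hs.1]⟩
    refine ((integrable_schwartz_mul_koranyiKernel hs3 φ).const_mul C).mono'
      (φ.continuous.norm.aestronglyMeasurable.mul
        (measurable_coneFourier _).aestronglyMeasurable) ?_
    filter_upwards [ae_ne_zero_snd] with p hp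
    rw [Real.norm_of_nonneg (mul_nonneg (norm_nonneg _) (coneFourier_pos hα0 hα1 hp).le),
      mul_left_comm]
    exact mul_le_mul_of_nonneg_left (hle p hp) (norm_nonneg _)

/-- The pairing of the slices `φ(·, τ)` with the Gaussian of parameter `v`, as a function of
`q = (τ, v)`. -/
noncomputable def slicePairing (φ : 𝓢(ℝ × ℝ, ℂ)) (q : ℝ × ℝ) : ℂ :=
  ∫ ξ : ℝ, φ (ξ, q.1) * (gaussFactor ξ q.2 : ℂ)

theorem integrable_triple_assoc {s : ℝ} (hs : s ∈ Ioo (0 : ℝ) 3) (φ : 𝓢(ℝ × ℝ, ℂ)) :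
    Integrable fun z : ℝ × (ℝ × ℝ) =>
      φ (z.1, z.2.1) * ((coneDensity (s / 4) z.2 * gaussFactor z.1 z.2.2 : ℝ) : ℂ) :=
  ((volume_preserving_prodAssoc (α₁ := ℝ) (β₁ := ℝ) (γ₁ := ℝ)).integrable_comp_emb
    MeasurableEquiv.prodAssoc.measurableEmbedding).1 (integrable_triple hs φ)

theorem integral_slice_eq (α : ℝ) (φ : 𝓢(ℝ × ℝ, ℂ)) (q : ℝ × ℝ) :
    ∫ ξ : ℝ, φ (ξ, q.1) * ((coneDensity α q * gaussFactor ξ q.2 : ℝ) : ℂ) =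
      (coneDensity α q : ℂ) * slicePairing φ q := by
  rw [slicePairing, ← integral_const_mul]
  congr with ξ
  push_cast
  ring

theorem integrable_cone_mul_slicePairing {s : ℝ} (hs : s ∈ Ioo (0 : ℝ) 3) (φ : 𝓢(ℝ × ℝ, ℂ)) :
    Integrable fun q : ℝ × ℝ => (coneDensity (s / 4) q : ℂ) * slicePairing φ q := by
  have h := (integrable_triple_assoc hs φ).integral_prod_right
  simpa only [integral_slice_eq] using h

theorem integral_mul_coneFourier {s : ℝ} (hs : s ∈ Ioo (0 : ℝ) 3) (φ : 𝓢(ℝ × ℝ, ℂ)) :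
    ∫ p : ℝ × ℝ, φ p * (coneFourier (s / 4) p : ℂ) =
      ∫ q : ℝ × ℝ, (coneDensity (s / 4) q : ℂ) * slicePairing φ q := by
  have h1 := integral_prod _ (integrable_triple hs φ)
  have h2 := integral_prod_symm _ (integrable_triple_assoc hs φ)
  have h3 := (volume_preserving_prodAssoc (α₁ := ℝ) (β₁ := ℝ) (γ₁ := ℝ)).integral_comp
    MeasurableEquiv.prodAssoc.measurableEmbedding (fun z : ℝ × (ℝ × ℝ) =>
      φ (z.1, z.2.1) * ((coneDensity (s / 4) z.2 * gaussFactor z.1 z.2.2 : ℝ) : ℂ))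
  simp only [integral_slice_eq] at h2
  refine Eq.trans ?_ ((h1.symm.trans h3).trans h2)
  congr with p
  simp only
  rw [integral_const_mul, integral_complex_ofReal]
  rfl

/-- The Parseval identity for the regularized kernel `((x² + ε)² + t²)^{-α}`, where the cone
integral converges absolutely. -/
theorem regularized_parseval {α : ℝ} (hα : 0 < α) {φ ψ : 𝓢(ℝ × ℝ, ℂ)}
    (hinv : ∀ q : ℝ × ℝ, φ q =
        ∫ p : ℝ × ℝ, Complex.exp ((2 * π * (p.1 * q.1 + p.2 * q.2) : ℝ) * Complex.I) * ψ p)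
    {ε : ℝ} (hε : 0 < ε) :
    ∫ p : ℝ × ℝ, ψ p *
      ((1 / 2 * π ^ (-(2 * α)) * Real.Gamma α ^ 2 *
        ((p.1 ^ 2 + ε) ^ 2 + p.2 ^ 2) ^ (-α) : ℝ) : ℂ) =
    ∫ q : ℝ × ℝ, (coneDensity α q : ℂ) * slicePairing φ q *
      (Real.exp (-(2 * π * q.2 * ε)) : ℂ) := by
  have hψc : Measurable ψ := ψ.continuous.measurable
  have hintg : Integrable (Function.uncurry fun (p q : ℝ × ℝ) => ψ p * ((coneDensity α q : ℂ) *
      Complex.exp (-(2 * π * q.2 * (p.1 ^ 2 + ε) : ℝ) + (2 * π * (p.2 * q.1) : ℝ) * Complex.I)))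
      (volume.prod volume) := by
    refine ((ψ.integrable (μ := volume)).norm.mul_prod (integrable_cone hα hε 0).norm).mono'
      (Measurable.aestronglyMeasurable ?_) (Eventually.of_forall fun z => ?_)
    · simp only [Function.uncurry_def]
      fun_prop
    · simp only [Function.uncurry]
      rw [norm_mul, norm_mul, norm_mul]
      refine mul_le_mul_of_nonneg_left ?_ (norm_nonneg _)
      by_cases h : |z.2.1| < z.2.2
      · have hv : 0 ≤ z.2.2 := (abs_nonneg _).trans h.le
        refine mul_le_mul_of_nonneg_left ?_ (norm_nonneg _)
        rw [Complex.norm_exp, Complex.norm_exp]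
        refine Real.exp_le_exp.2 ?_
        simp only [Complex.add_re, Complex.neg_re, Complex.ofReal_re, Complex.re_ofReal_mul,
          Complex.I_re, mul_zero, add_zero]
        have : 0 ≤ 2 * π * z.2.2 * z.1.1 ^ 2 := by positivity
        linarith
      · simp [coneDensity, h]
  calc _ = ∫ p : ℝ × ℝ, ∫ q : ℝ × ℝ, ψ p * ((coneDensity α q : ℂ) *
      Complex.exp (-(2 * π * q.2 * (p.1 ^ 2 + ε) : ℝ) +
        (2 * π * (p.2 * q.1) : ℝ) * Complex.I)) := by
        congr with p
        rw [integral_const_mul, integral_cone hα (by positivity)]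
    _ = _ := integral_integral_swap hintg
    _ = _ := by
        congr with q
        by_cases h : |q.1| < q.2
        · have hv : 0 < q.2 := (abs_nonneg _).trans_lt h
          rw [slicePairing, slice_parseval hinv hv, ← integral_const_mul, ← integral_mul_const]
          congr with p
          have e : Complex.exp (-(2 * π * q.2 * (p.1 ^ 2 + ε) : ℝ) +
              (2 * π * (p.2 * q.1) : ℝ) * Complex.I) =
              Complex.exp (-(2 * π * q.2 * p.1 ^ 2 : ℝ) + (2 * π * (p.2 * q.1) : ℝ) * Complex.I) *
              (Real.exp (-(2 * π * q.2 * ε)) : ℂ) := by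
            rw [Complex.ofReal_exp, ← Complex.exp_add]
            congr 1
            push_cast
            ring
          rw [e]
          ring
        · simp [coneDensity, h]

/-- Removing the regularization: `coneFourier` represents the Fourier transform of the kernel up to
the constant of the cone integral. -/
theorem koranyi_parseval {s : ℝ} (hs : s ∈ Ioo (0 : ℝ) 3) {φ ψ : 𝓢(ℝ × ℝ, ℂ)}
    (hinv : ∀ q : ℝ × ℝ, φ q =
        ∫ p : ℝ × ℝ, Complex.exp ((2 * π * (p.1 * q.1 + p.2 * q.2) : ℝ) * Complex.I) * ψ p) :
    ((1 / 2 * π ^ (-(2 * (s / 4))) * Real.Gamma (s / 4) ^ 2 : ℝ) : ℂ) *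
      ∫ p : ℝ × ℝ, ψ p * (koranyiKernel s p : ℂ) =
    ∫ p : ℝ × ℝ, φ p * (coneFourier (s / 4) p : ℂ) := by
  have hα0 : 0 < s / 4 := by linarith [hs.1]
  have hψc : Measurable ψ := ψ.continuous.measurable
  set c : ℝ := 1 / 2 * π ^ (-(2 * (s / 4))) * Real.Gamma (s / 4) ^ 2 with hc
  have hc0 : 0 ≤ c := by positivity
  set ε : ℕ → ℝ := fun n => 1 / ((n : ℝ) + 1) with hε
  have hε0 : ∀ n, 0 < ε n := fun n => by simp only [hε]; positivity
  have hεt : Tendsto ε atTop (nhds 0) := tendsto_one_div_add_atTop_nhds_zero_nat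
  have hL : Tendsto (fun n => ∫ p : ℝ × ℝ, ψ p *
      ((c * ((p.1 ^ 2 + ε n) ^ 2 + p.2 ^ 2) ^ (-(s / 4)) : ℝ) : ℂ)) atTop
      (nhds (∫ p : ℝ × ℝ, ψ p * ((c * koranyiKernel s p : ℝ) : ℂ))) := by
    refine tendsto_integral_of_dominated_convergence
      (fun p => c * (‖ψ p‖ * koranyiKernel s p)) (fun n => ?_)
      ((integrable_schwartz_mul_koranyiKernel hs ψ).const_mul c) (fun n => ?_) ?_
    · exact Measurable.aestronglyMeasurable (by fun_prop)
    · filter_upwards [ae_ne_zero_fst] with p hp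
      have hp2 : 0 < p.1 ^ 2 := by positivity
      have hp4 : 0 < p.1 ^ 4 := by positivity
      have hb : p.1 ^ 4 + p.2 ^ 2 ≤ (p.1 ^ 2 + ε n) ^ 2 + p.2 ^ 2 := by
        nlinarith [hε0 n, mul_pos hp2 (hε0 n), sq_nonneg (ε n)]
      have hk : ((p.1 ^ 2 + ε n) ^ 2 + p.2 ^ 2) ^ (-(s / 4)) ≤ koranyiKernel s p :=
        Real.rpow_le_rpow_of_nonpos (by positivity) hb (by linarith)
      rw [norm_mul, Complex.norm_real, Real.norm_of_nonneg (by positivity), mul_left_comm]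
      gcongr
    · filter_upwards [ae_ne_zero_fst] with p hp
      have hp4 : 0 < p.1 ^ 4 := by positivity
      have h1 : Tendsto (fun n => (p.1 ^ 2 + ε n) ^ 2 + p.2 ^ 2) atTop
          (nhds (p.1 ^ 4 + p.2 ^ 2)) := by
        have := ((hεt.const_add (p.1 ^ 2)).pow 2).add_const (p.2 ^ 2)
        convert this using 2
        ring
      have h2 := (h1.rpow_const (p := -(s / 4)) (Or.inl (by positivity))).const_mul c
      exact ((Complex.continuous_ofReal.tendsto _).comp h2).const_mul (ψ p)
  have hA := integrable_cone_mul_slicePairing hs φ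
  have hR : Tendsto (fun n => ∫ q : ℝ × ℝ, (coneDensity (s / 4) q : ℂ) * slicePairing φ q *
      (Real.exp (-(2 * π * q.2 * ε n)) : ℂ)) atTop
      (nhds (∫ q : ℝ × ℝ, (coneDensity (s / 4) q : ℂ) * slicePairing φ q)) := by
    refine tendsto_integral_of_dominated_convergence _ (fun n => ?_) hA.norm (fun n => ?_) ?_
    · exact hA.aestronglyMeasurable.mul (Measurable.aestronglyMeasurable (by fun_prop))
    · refine Eventually.of_forall fun q => ?_
      by_cases h : |q.1| < q.2
      · have hv : 0 < q.2 := (abs_nonneg _).trans_lt h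
        rw [norm_mul _ (Real.exp _ : ℂ), Complex.norm_real,
          Real.norm_of_nonneg (Real.exp_pos _).le]
        refine mul_le_of_le_one_right (norm_nonneg _) (Real.exp_le_one_iff.2 ?_)
        have := hε0 n
        have : 0 ≤ 2 * π * q.2 * ε n := by positivity
        linarith
      · simp [coneDensity, h]
    · refine Eventually.of_forall fun q => ?_
      have h1 : Tendsto (fun n => Real.exp (-(2 * π * q.2 * ε n))) atTop (nhds 1) := by
        have := (Real.continuous_exp.tendsto _).comp (hεt.const_mul (2 * π * q.2)).neg
        simpa [Function.comp_def] using this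
      have h2 := ((Complex.continuous_ofReal.tendsto _).comp h1).const_mul
        ((coneDensity (s / 4) q : ℂ) * slicePairing φ q)
      simpa using h2
  have hEq : ∀ n, ∫ p : ℝ × ℝ, ψ p *
      ((c * ((p.1 ^ 2 + ε n) ^ 2 + p.2 ^ 2) ^ (-(s / 4)) : ℝ) : ℂ) =
      ∫ q : ℝ × ℝ, (coneDensity (s / 4) q : ℂ) * slicePairing φ q *
      (Real.exp (-(2 * π * q.2 * ε n)) : ℂ) := fun n => regularized_parseval hα0 hinv (hε0 n)
  simp only [hEq] at hL
  rw [integral_mul_coneFourier hs φ, ← tendsto_nhds_unique hL hR, ← integral_const_mul]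
  congr with p
  push_cast
  ring

/-- **Lemma 3.2 (first part).** For `s ∈ (0,3)`, the Korányi kernel `f_s` is locally integrable
and bounded outside the unit ball, and `φ ↦ ∫ φ f_s` defines a tempered distribution on `ℝ²`.
Moreover, if `s ∈ (1,3)` then there are a locally integrable `g` and a constant `C_s > 0`
such that `g` represents the distributional Fourier transform of `f_s`
(`∫ φ̂ f_s = ∫ φ g` for all Schwartz `φ`) and `0 < g(ξ) ≤ C_s f_{3-s}(ξ)` whenever `ξ₂ ≠ 0`. -/
theorem koranyiKernel_fourier (s : ℝ) (hs : s ∈ Set.Ioo (0 : ℝ) 3) :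
    MeasureTheory.LocallyIntegrable (koranyiKernel s) MeasureTheory.volume ∧
    (∃ M : ℝ, ∀ p : ℝ × ℝ, 1 ≤ ‖p‖ → |koranyiKernel s p| ≤ M) ∧
    (∃ T : SchwartzMap (ℝ × ℝ) ℝ →L[ℝ] ℝ, ∀ φ : SchwartzMap (ℝ × ℝ) ℝ,
      T φ = ∫ p : ℝ × ℝ, φ p * koranyiKernel s p) ∧
    (s ∈ Set.Ioo (1 : ℝ) 3 →
      ∃ (g : ℝ × ℝ → ℝ) (C : ℝ), 0 < C ∧
        MeasureTheory.LocallyIntegrable g MeasureTheory.volume ∧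
        (∀ φ : SchwartzMap (ℝ × ℝ) ℂ,
          (∫ p : ℝ × ℝ, fourier2 (fun q => φ q) p * (koranyiKernel s p : ℂ)) =
          ∫ ξ : ℝ × ℝ, φ ξ * (g ξ : ℂ)) ∧
        (∀ ξ : ℝ × ℝ, ξ.2 ≠ 0 → 0 < g ξ ∧ g ξ ≤ C * koranyiKernel (3 - s) ξ)) := by
  refine ⟨locallyIntegrable_koranyiKernel hs, ⟨1, koranyiKernel_le_one hs.1⟩,
    exists_koranyiDistribution hs, fun _ => ?_⟩
  have hα0 : 0 < s / 4 := by linarith [hs.1]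
  have hα1 : s / 4 < 3 / 4 := by linarith [hs.2]
  have hs3 : 3 - s ∈ Ioo (0 : ℝ) 3 := ⟨by linarith [hs.2], by linarith [hs.1]⟩
  obtain ⟨C, hC, hle⟩ := coneFourier_le hs
  set c : ℝ := 1 / 2 * π ^ (-(2 * (s / 4))) * Real.Gamma (s / 4) ^ 2 with hc
  have hc0 : 0 < c := by
    have := Real.Gamma_pos_of_pos hα0
    positivity
  have hbound : ∀ ξ : ℝ × ℝ, ξ.2 ≠ 0 → 0 < c⁻¹ * coneFourier (s / 4) ξ ∧
      c⁻¹ * coneFourier (s / 4) ξ ≤ c⁻¹ * C * koranyiKernel (3 - s) ξ := by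
    intro ξ hξ
    refine ⟨mul_pos (inv_pos.2 hc0) (coneFourier_pos hα0 hα1 hξ), ?_⟩
    rw [mul_assoc]
    exact mul_le_mul_of_nonneg_left (hle ξ hξ) (inv_pos.2 hc0).le
  refine ⟨fun ξ => c⁻¹ * coneFourier (s / 4) ξ, c⁻¹ * C, by positivity, ?_, fun φ => ?_, hbound⟩
  · refine LocallyIntegrable.mono ((locallyIntegrable_koranyiKernel hs3).smul (c⁻¹ * C))
      ((measurable_coneFourier _).aestronglyMeasurable.const_mul _) ?_
    filter_upwards [ae_ne_zero_snd] with ξ hξ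
    obtain ⟨h1, h2⟩ := hbound ξ hξ
    rw [Real.norm_of_nonneg h1.le]
    exact h2.trans (le_abs_self _)
  · obtain ⟨ψ, hψ, hinv⟩ := exists_schwartz_fourier2 φ
    have h := koranyi_parseval hs hinv
    have hcc : (c : ℂ) ≠ 0 := by exact_mod_cast hc0.ne'
    simp only [hψ]
    have e : ∀ ξ : ℝ × ℝ, φ ξ * ((c⁻¹ * coneFourier (s / 4) ξ : ℝ) : ℂ) =
        (c : ℂ)⁻¹ * (φ ξ * (coneFourier (s / 4) ξ : ℂ)) := by
      intro ξ
      push_cast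
      ring
    simp only [e]
    rw [integral_const_mul, ← h, inv_mul_cancel_left₀ hcc]
end
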